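/- arXiv:1608.01463 — 4 statements merged into one kernel-verified Lean document; each statement's English description precedes it below -/
import Mathlib

section
/- Let G=(V,E) be a multigraph without self-loops, let s ∈ V, let x be a half-integral minimum s-cycle cover of G, and let G'=(V,E') be the multigraph obtained from G by applying the s-cycle cover reduction with respect to s and x. Then x is also an s-cycle cover of G'; that is, for every s-cycle C of G' one has x(V(C)) ≥ 1. -/
/-- A multigraph on vertex type `V` with edge type `E`: each edge has an
unordered pair of endpoints.  Parallel edges are distinguished (they are
different elements of `E`), and self-loops are edges whose endpoint pair is
diagonal. -/
structure Multigraph (V : Type) (E : Type) where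
  ends : E → Sym2 V

namespace Multigraph

variable {V E : Type}

/-- A multigraph has no self-loops. -/
def LoopFree (G : Multigraph V E) : Prop := ∀ e : E, ¬ (G.ends e).IsDiag

/-- The degree of a vertex: the number of incident edges (parallel edges
counted with multiplicity). -/
noncomputable def degree (G : Multigraph V E) (v : V) : ℕ :=
  Nat.card {e : E // v ∈ G.ends e}

/-- A walk `(v₀, e₁, v₁, …, e_l, v_l)` of positive length `l ≥ 1` in which
each edge `eᵢ` joins `v_{i-1}` and `vᵢ`. -/
structure Walk (G : Multigraph V E) where
  len : ℕ
  len_pos : 0 < len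
  verts : Fin (len + 1) → V
  edges : Fin len → E
  valid : ∀ i : Fin len, G.ends (edges i) = s(verts i.castSucc, verts i.succ)

namespace Walk

variable {G : Multigraph V E}

/-- The first vertex of a walk. -/
def start (W : G.Walk) : V := W.verts 0

/-- The last vertex of a walk. -/
def finish (W : G.Walk) : V := W.verts (Fin.last W.len)

/-- A cycle: a closed walk of positive length with pairwise distinct edges and
pairwise distinct vertices (except that the first and last vertex coincide). -/
def IsCycle (W : G.Walk) : Prop :=
  W.start = W.finish ∧ Function.Injective W.edges ∧
    Function.Injective fun i : Fin W.len => W.verts i.castSucc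

/-- An `s`-cycle: a walk with `v₀ = v_l = s`, with `vᵢ ≠ s` for `0 < i < l`,
with no U-turns (`eᵢ ≠ e_{i+1}`), and in which every edge occurs at most
twice. -/
def IsSCycle (W : G.Walk) (s : V) : Prop :=
  W.start = s ∧ W.finish = s ∧
  (∀ i : Fin (W.len + 1), i ≠ 0 → i ≠ Fin.last W.len → W.verts i ≠ s) ∧
  (∀ i j : Fin W.len, (i : ℕ) + 1 = (j : ℕ) → W.edges i ≠ W.edges j) ∧
  (∀ e : E, Nat.card {i : Fin W.len // W.edges i = e} ≤ 2)

/-- The multiplicity of a vertex `v` in the multiset `V(W)` of vertices of a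
walk `W`. -/
noncomputable def vertCount (W : G.Walk) (v : V) : ℕ :=
  Nat.card {i : Fin (W.len + 1) // W.verts i = v}

end Walk

/-- `S` is a feedback vertex set: every cycle of `G` meets `S`
(equivalently, `G − S` contains no cycle). -/
def IsFVS (G : Multigraph V E) (S : Set V) : Prop :=
  ∀ W : G.Walk, W.IsCycle → ∃ i, W.verts i ∈ S

/-- The minimum size of a feedback vertex set. -/
noncomputable def fvs [Fintype V] (G : Multigraph V E) : ℕ :=
  sInf {n : ℕ | ∃ S : Set V, G.IsFVS S ∧ S.ncard = n}

/-- `x : V → ℝ≥0` is an `s`-cycle cover: `x s = 0` and every `s`-cycle `C`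
satisfies `x(V(C)) ≥ 1` (vertices counted with multiplicity). -/
def IsSCycleCover (G : Multigraph V E) (s : V) (x : V → ℝ) : Prop :=
  (∀ v, 0 ≤ x v) ∧ x s = 0 ∧
    ∀ W : G.Walk, W.IsSCycle s → 1 ≤ ∑ i, x (W.verts i)

/-- A function is half-integral if it takes values in `{0, 1/2, 1}`. -/
def HalfIntegral (x : V → ℝ) : Prop := ∀ v, x v = 0 ∨ x v = 1/2 ∨ x v = 1

/-- A minimum `s`-cycle cover. -/
def IsMinSCycleCover [Fintype V] (G : Multigraph V E) (s : V) (x : V → ℝ) : Prop :=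
  G.IsSCycleCover s x ∧ ∀ x' : V → ℝ, G.IsSCycleCover s x' → ∑ v, x v ≤ ∑ v, x' v

/-- An `s`-cycle packing: a nonnegative, finitely supported weighting of the
`s`-cycles such that every vertex `v ≠ s` is used (with multiplicity) with
total weight at most `1`. -/
def IsSCyclePacking (G : Multigraph V E) (s : V) (y : G.Walk →₀ ℝ) : Prop :=
  (∀ W, 0 ≤ y W) ∧ (∀ W, y W ≠ 0 → W.IsSCycle s) ∧
    ∀ v : V, v ≠ s → ∑ W ∈ y.support, (W.vertCount v : ℝ) * y W ≤ 1

/-- The size of an `s`-cycle packing. -/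
noncomputable def packingSize {G : Multigraph V E} (y : G.Walk →₀ ℝ) : ℝ :=
  ∑ W ∈ y.support, y W

/-- Number of edges incident to `v` with `f`-value 1. -/
noncomputable def cnt1 (G : Multigraph V E) (f : E → ℝ) (v : V) : ℕ :=
  Nat.card {e : E // v ∈ G.ends e ∧ f e = 1}

/-- Number of edges incident to `v` with `f`-value 1/2. -/
noncomputable def cntH (G : Multigraph V E) (f : E → ℝ) (v : V) : ℕ :=
  Nat.card {e : E // v ∈ G.ends e ∧ f e = 1/2}

/-- type-O: all incident edges have `f`-value 0. -/
def IsTypeO (G : Multigraph V E) (f : E → ℝ) (v : V) : Prop :=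
  ∀ e : E, v ∈ G.ends e → f e = 0

/-- type-I: exactly two incident edges have value 1 and none has value 1/2. -/
def IsTypeI (G : Multigraph V E) (f : E → ℝ) (v : V) : Prop :=
  G.cnt1 f v = 2 ∧ G.cntH f v = 0

/-- type-H: no incident edge has value 1 and exactly two have value 1/2. -/
def IsTypeH (G : Multigraph V E) (f : E → ℝ) (v : V) : Prop :=
  G.cnt1 f v = 0 ∧ G.cntH f v = 2

/-- type-T: exactly one incident edge has value 1 and exactly two have value 1/2. -/
def IsTypeT (G : Multigraph V E) (f : E → ℝ) (v : V) : Prop :=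
  G.cnt1 f v = 1 ∧ G.cntH f v = 2

/-- A basic `s`-cycle packing: `f : E → {0,1/2,1}` with `f(e) ∈ {0,1}` on edges
incident to `s`, every vertex `v ≠ s` of one of the four types O, I, H, T, and
every cycle consisting of edges of value 1/2 (i.e. every half-integral cycle)
containing an odd number of type-T vertices. -/
def IsBasicSCyclePacking (G : Multigraph V E) (s : V) (f : E → ℝ) : Prop :=
  (∀ e : E, f e = 0 ∨ f e = 1/2 ∨ f e = 1) ∧
  (∀ e : E, s ∈ G.ends e → f e = 0 ∨ f e = 1) ∧
  (∀ v : V, v ≠ s →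
    G.IsTypeO f v ∨ G.IsTypeI f v ∨ G.IsTypeH f v ∨ G.IsTypeT f v) ∧
  (∀ W : G.Walk, W.IsCycle → (∀ j, f (W.edges j) = 1/2) →
    Odd (Nat.card {i : Fin W.len // G.IsTypeT f (W.verts i.castSucc)}))

/-- The size of a basic `s`-cycle packing: `(1/2) · Σ_{e ∈ δ(s)} f(e)`. -/
noncomputable def basicSize [Fintype E] (G : Multigraph V E) (s : V) (f : E → ℝ) : ℝ :=
  (1/2) * ∑ e : E, Set.indicator {e' : E | s ∈ G.ends e'} f e

/-- `u` and `v` are connected by a walk avoiding the vertex set `S` and the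
edge set `F` (or `u = v`). -/
def Reach (G : Multigraph V E) (S : Set V) (F : Set E) (u v : V) : Prop :=
  u = v ∨ ∃ W : G.Walk, (∀ i, W.verts i ∉ S) ∧ (∀ j, W.edges j ∉ F) ∧
    W.start = u ∧ W.finish = v

/-- The edge `e` belongs to the set `B` of the `s`-cycle cover reduction with
respect to the set `X`: `e` joins `s` to some `u ∉ X`, `e` is a bridge of
`G − X` (its endpoints are disconnected in `G − X − e`), and the connected
component of `u` in `G − X − s` is a tree (no cycle of `G − X − s` passes
through a vertex reachable from `u` in `G − X − s`). -/
def InB (G : Multigraph V E) (s : V) (X : Set V) (e : E) : Prop :=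
  ∃ u : V, G.ends e = s(s, u) ∧ u ≠ s ∧ u ∉ X ∧ s ∉ X ∧
    ¬ G.Reach X {e} s u ∧
    ¬ ∃ W : G.Walk, W.IsCycle ∧ (∀ i, W.verts i ∉ X ∪ {s}) ∧
        G.Reach (X ∪ {s}) ∅ u W.start

/-- The graph `G' = (V, E')` obtained from `G` by the `s`-cycle cover
reduction with respect to a half-integral `s`-cycle cover `x`: with
`X = x⁻¹(1)`, insert a double edge (two new parallel edges) between `s` and
each `v ∈ X`, and delete the edges of `B`. -/
def reduced (G : Multigraph V E) (s : V) (x : V → ℝ) :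
    Multigraph V ({e : E // ¬ G.InB s {v : V | x v = 1} e} ⊕ ({v : V // x v = 1} × Bool)) where
  ends := fun e =>
    match e with
    | .inl e' => G.ends e'.val
    | .inr p => s(s, p.1.val)

/-- The graph `G − s` obtained by deleting the vertex `s` and all incident
edges (the vertex `s` is kept as an isolated vertex). -/
def deleteVertex (G : Multigraph V E) (s : V) :
    Multigraph V {e : E // s ∉ G.ends e} where
  ends := fun e => G.ends e.val

/-- An `f`-augmenting walk for a basic `s`-cycle packing `f`:
(1) it starts at `s`; (2) its first edge has value 0; (3) its edges are
pairwise distinct; (4) its vertices `v₀,…,v_{l-1}` are pairwise distinct;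
(5) each interior vertex `vᵢ` (`1 ≤ i ≤ l-1`) is type-O, or type-I with
`f(e) = 1` for at least one of `e ∈ {eᵢ, e_{i+1}}`; (6) if the last vertex
`v_l` equals `vᵢ` for some `i < l` then: `v_l = s` and `f(e_l) = 0`, or `v_l`
is type-O, or `v_l` is type-I and `f(e) = 1` for at least one of
`e ∈ {eᵢ, e_l}`; (7) if `v_l` is a new vertex then it is type-H or type-T. -/
def IsAugmentingWalk (G : Multigraph V E) (s : V) (f : E → ℝ) (W : G.Walk) : Prop :=
  W.start = s ∧
  f (W.edges ⟨0, W.len_pos⟩) = 0 ∧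
  Function.Injective W.edges ∧
  Function.Injective (fun i : Fin W.len => W.verts i.castSucc) ∧
  (∀ i : Fin W.len, 0 < i.val →
    (G.IsTypeO f (W.verts i.castSucc) ∨
      (G.IsTypeI f (W.verts i.castSucc) ∧
        (f (W.edges ⟨i.val - 1, Nat.lt_of_le_of_lt (Nat.sub_le _ _) i.isLt⟩) = 1 ∨
          f (W.edges i) = 1)))) ∧
  (∀ i : Fin W.len, W.finish = W.verts i.castSucc →
    ((W.finish = s ∧ f (W.edges ⟨W.len - 1, Nat.sub_lt W.len_pos Nat.one_pos⟩) = 0) ∨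
     (W.finish ≠ s ∧ G.IsTypeO f W.finish) ∨
     (W.finish ≠ s ∧ G.IsTypeI f W.finish ∧
       (f (W.edges ⟨i.val - 1, Nat.lt_of_le_of_lt (Nat.sub_le _ _) i.isLt⟩) = 1 ∨
         f (W.edges ⟨W.len - 1, Nat.sub_lt W.len_pos Nat.one_pos⟩) = 1)))) ∧
  ((∀ i : Fin W.len, W.finish ≠ W.verts i.castSucc) →
    (G.IsTypeH f W.finish ∨ G.IsTypeT f W.finish))

/-- `g = f_W` is obtained from `f` by augmenting along the walk `W`.
If `v_l = s` (so `h = l`), the values of `f` on `e₁,…,e_l` are flipped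
(`f ↦ 1 − f`).  If `v_l ≠ s` equals an earlier vertex `vᵢ` (so `h = i`), the
values on `e₁,…,e_h` are flipped and the values on `e_{h+1},…,e_l` are set to
`1/2`.  If `v_l ≠ s` is a new vertex (type-H or type-T, with `h = l`), the
values on `e₁,…,e_l` are flipped and, on the half-integral cycle `C` of `v_l`
(traversed from `t₀ = v_l` in either direction), the edges of the segment
`Pᵢ` between consecutive markers `tᵢ, t_{i+1}` (the markers being `v_l`
together with the type-T vertices of `C`) receive value `0` for even `i` and
`1` for odd `i`; the segment index of an edge is the number of type-T
vertices strictly preceding it along the traversal.  All other edges keep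
their `f`-value. -/
def AugmentedAlong (G : Multigraph V E) (s : V) (f : E → ℝ) (W : G.Walk) (g : E → ℝ) : Prop :=
  -- Case A : the walk returns to `s`.
  (W.finish = s ∧
    (∀ j : Fin W.len, g (W.edges j) = 1 - f (W.edges j)) ∧
    (∀ e : E, (∀ j, e ≠ W.edges j) → g e = f e)) ∨
  -- Case B : the last vertex is a repeated vertex `vᵢ ≠ s` (type-O or type-I).
  (W.finish ≠ s ∧
    (∃ i : Fin W.len, W.finish = W.verts i.castSucc ∧
      (∀ j : Fin W.len, j.val < i.val → g (W.edges j) = 1 - f (W.edges j)) ∧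
      (∀ j : Fin W.len, i.val ≤ j.val → g (W.edges j) = 1/2) ∧
      (∀ e : E, (∀ j, e ≠ W.edges j) → g e = f e))) ∨
  -- Case C : the last vertex is a new vertex of type-H or type-T.
  (W.finish ≠ s ∧ (∀ i : Fin W.len, W.finish ≠ W.verts i.castSucc) ∧
    (∃ C : G.Walk, C.IsCycle ∧ C.verts 0 = W.finish ∧
      (∀ j, f (C.edges j) = 1/2) ∧
      (∀ j : Fin W.len, g (W.edges j) = 1 - f (W.edges j)) ∧
      (∀ j : Fin C.len,
        g (C.edges j) =
          if Even (Nat.card {m : Fin C.len //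
              1 ≤ m.val ∧ m.val ≤ j.val ∧ G.IsTypeT f (C.verts m.castSucc)})
          then 0 else 1) ∧
      (∀ e : E, (∀ j, e ≠ W.edges j) → (∀ j, e ≠ C.edges j) → g e = f e)))


end Multigraph

/-- `x` is still an `s`-cycle cover of the reduced graph `G'`. -/
theorem stmt8_reduced_isSCycleCover {V E : Type} [Fintype V] [Fintype E] (G : Multigraph V E)
    (hloop : G.LoopFree) (s : V) (x : V → ℝ)
    (hx : G.IsMinSCycleCover s x) (hhalf : Multigraph.HalfIntegral x) :
    (G.reduced s x).IsSCycleCover s x := by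
  obtain ⟨⟨hnn, hs, hcov⟩, -⟩ := hx
  refine ⟨hnn, hs, ?_⟩
  intro W hW
  by_cases hX : ∃ i, x (W.verts i) = 1
  · obtain ⟨i, hi⟩ := hX
    have h := Finset.single_le_sum (f := fun i => x (W.verts i)) (fun j _ => hnn _)
      (Finset.mem_univ i)
    simpa [hi] using h
  · have hold : ∀ i, ∃ e, W.edges i = Sum.inl e := by
      intro i
      rcases he : W.edges i with e | p
      · exact ⟨e, rfl⟩
      · exfalso
        have hv := W.valid i
        rw [he] at hv
        have hmem : p.1.val ∈ s(W.verts i.castSucc, W.verts i.succ) := by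
          rw [← hv]
          exact Sym2.mem_mk_right _ _
        rcases Sym2.mem_iff.1 hmem with h | h
        · exact hX ⟨_, h ▸ p.1.2⟩
        · exact hX ⟨_, h ▸ p.1.2⟩
    choose g hg using hold
    obtain ⟨h1, h2, h3, h4, h5⟩ := hW
    refine hcov ⟨W.len, W.len_pos, W.verts, fun i => (g i).val, fun i => ?_⟩
      ⟨h1, h2, h3, ?_, ?_⟩
    · have hv := W.valid i
      rw [hg i] at hv
      exact hv
    · intro i j hij heq
      apply h4 i j hij
      rw [hg i, hg j]
      exact congrArg Sum.inl (Subtype.ext heq)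
    · intro e
      by_cases hB : G.InB s {v : V | x v = 1} e
      · have : IsEmpty {i : Fin W.len // (g i).val = e} :=
          ⟨fun i => (g i.1).2 (by rw [i.2]; exact hB)⟩
        exact (Nat.card_of_isEmpty (α := {i : Fin W.len // (g i).val = e})).le.trans
          (Nat.zero_le _)
      · refine le_trans (le_of_eq ?_) (h5 (Sum.inl ⟨e, hB⟩))
        apply Nat.card_congr
        refine Equiv.subtypeEquivRight (fun i => ?_)
        rw [hg i, Sum.inl.injEq, Subtype.ext_iff]
end

section
/- Let G=(V,E) be a multigraph without self-loops and let s ∈ V. If there exists a basic s-cycle packing of G of size σ, then there exists an s-cycle packing of G of size σ. -/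
namespace BasicPack

variable {V E : Type}

/-- Darts: an edge, a copy index and a direction. -/
abbrev Dart (E : Type) := E × Bool × Bool

/-- The tail of a dart. -/
def tl (a b : E → V) (x : Dart E) : V := if x.2.2 then a x.1 else b x.1

/-- The reversed dart. -/
def flip (x : Dart E) : Dart E := (x.1, x.2.1, !x.2.2)

/-- Copies that are used: two copies of value-1 edges, one copy of value-1/2 edges. -/
def valid (f : E → ℝ) (e : E) (i : Bool) : Prop := f e = 1 ∨ (f e = 1/2 ∧ i = false)

theorem flip_flip (x : Dart E) : flip (flip x) = x := by simp [flip]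

theorem flip_ne (x : Dart E) : flip x ≠ x := by
  intro h
  have := congrArg (fun y => y.2.2) h
  simp [flip] at this

/-- Matching of copies at a vertex. -/
theorem copy_matching [Finite E] (G : Multigraph V E) (f : E → ℝ) (v : V)
    (h : G.IsTypeO f v ∨ G.IsTypeI f v ∨ G.IsTypeH f v ∨ G.IsTypeT f v) :
    ∃ μ : E × Bool → E × Bool, ∀ c : E × Bool, v ∈ G.ends c.1 → valid f c.1 c.2 →
      (v ∈ G.ends (μ c).1 ∧ valid f (μ c).1 (μ c).2 ∧ μ (μ c) = c ∧ (μ c).1 ≠ c.1) := by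
  classical
  have n1 : G.cnt1 f v = {e : E | v ∈ G.ends e ∧ f e = 1}.ncard := rfl
  have nH : G.cntH f v = {e : E | v ∈ G.ends e ∧ f e = 1/2}.ncard := rfl
  have key0 : ∀ p : E → Prop, {e : E | p e}.ncard = 0 → ∀ e, ¬ p e := by
    intro p hp e he
    rw [Set.ncard_eq_zero (Set.toFinite _)] at hp
    have : e ∈ {e : E | p e} := he
    rw [hp] at this
    exact this
  have key1 : ∀ p : E → Prop, {e : E | p e}.ncard = 1 → ∃ x, ∀ e, p e ↔ e = x := by
    intro p hp
    obtain ⟨x, hx⟩ := Set.ncard_eq_one.1 hp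
    exact ⟨x, fun e => by simpa using Set.ext_iff.1 hx e⟩
  have key2 : ∀ p : E → Prop, {e : E | p e}.ncard = 2 →
      ∃ x y, x ≠ y ∧ ∀ e, p e ↔ (e = x ∨ e = y) := by
    intro p hp
    obtain ⟨x, y, hxy, hx⟩ := Set.ncard_eq_two.1 hp
    exact ⟨x, y, hxy, fun e => by simpa using Set.ext_iff.1 hx e⟩
  rcases h with h | ⟨h1, hH⟩ | ⟨h1, hH⟩ | ⟨h1, hH⟩
  · refine ⟨id, fun c hc hv => ?_⟩
    have := h _ hc
    rcases hv with hv | ⟨hv, _⟩ <;> rw [this] at hv <;> norm_num at hv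
  · rw [n1] at h1
    rw [nH] at hH
    obtain ⟨x, y, hxy, h2⟩ := key2 _ h1
    have h0 := key0 _ hH
    have hx := (h2 x).2 (Or.inl rfl)
    have hy := (h2 y).2 (Or.inr rfl)
    refine ⟨fun c => (Equiv.swap x y c.1, c.2), fun c hc hv => ?_⟩
    obtain ⟨e, i⟩ := c
    dsimp only at *
    have he : f e = 1 := by
      rcases hv with hv | ⟨hv, _⟩
      · exact hv
      · exact absurd ⟨hc, hv⟩ (h0 e)
    rcases (h2 e).1 ⟨hc, he⟩ with rfl | rfl
    · simp [valid, hy, hxy.symm]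
    · simp [valid, hx, hxy]
  · rw [n1] at h1
    rw [nH] at hH
    obtain ⟨x, y, hxy, h2⟩ := key2 _ hH
    have h0 := key0 _ h1
    have hx := (h2 x).2 (Or.inl rfl)
    have hy := (h2 y).2 (Or.inr rfl)
    refine ⟨fun c => (Equiv.swap x y c.1, c.2), fun c hc hv => ?_⟩
    obtain ⟨e, i⟩ := c
    dsimp only at *
    have he : f e = 1/2 ∧ i = false := by
      rcases hv with hv | hv
      · exact absurd ⟨hc, hv⟩ (h0 e)
      · exact hv
    obtain ⟨he, rfl⟩ := he
    rcases (h2 e).1 ⟨hc, he⟩ with rfl | rfl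
    · rw [Equiv.swap_apply_left, Equiv.swap_apply_right]
      exact ⟨hy.1, Or.inr ⟨hy.2, rfl⟩, rfl, hxy.symm⟩
    · rw [Equiv.swap_apply_right, Equiv.swap_apply_left]
      exact ⟨hx.1, Or.inr ⟨hx.2, rfl⟩, rfl, hxy⟩
  · rw [n1] at h1
    rw [nH] at hH
    obtain ⟨x, y, hxy, h2⟩ := key2 _ hH
    obtain ⟨p, hp1⟩ := key1 _ h1
    have hx := (h2 x).2 (Or.inl rfl)
    have hy := (h2 y).2 (Or.inr rfl)
    have hp := (hp1 p).2 rfl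
    have hpx : p ≠ x := by
      rintro rfl
      have := hp.2.symm.trans hx.2
      norm_num at this
    have hpy : p ≠ y := by
      rintro rfl
      have := hp.2.symm.trans hy.2
      norm_num at this
    let μ : E × Bool → E × Bool := fun c =>
      if c = (p, false) then (x, false) else if c = (p, true) then (y, false)
      else if c = (x, false) then (p, false) else (p, true)
    have e1 : μ (p, false) = (x, false) := by simp [μ]
    have e2 : μ (p, true) = (y, false) := by simp [μ]
    have e3 : μ (x, false) = (p, false) := by simp [μ, hpx.symm]
    have e4 : μ (y, false) = (p, true) := by simp [μ, hpy.symm, hxy.symm]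
    refine ⟨μ, fun c hc hv => ?_⟩
    obtain ⟨e, i⟩ := c
    dsimp only at hc hv
    rcases hv with hv | ⟨hv, rfl⟩
    · obtain rfl := (hp1 e).1 ⟨hc, hv⟩
      cases i
      · rw [e1, e3]
        exact ⟨hx.1, Or.inr ⟨hx.2, rfl⟩, rfl, hpx.symm⟩
      · rw [e2, e4]
        exact ⟨hy.1, Or.inr ⟨hy.2, rfl⟩, rfl, hpy.symm⟩
    · rcases (h2 e).1 ⟨hc, hv⟩ with rfl | rfl
      · rw [e3, e1]
        exact ⟨hp.1, Or.inl hp.2, rfl, hpx⟩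
      · rw [e4, e2]
        exact ⟨hp.1, Or.inl hp.2, rfl, hpy⟩

/-- The global matching on darts. -/
theorem dart_matching [Finite E] (G : Multigraph V E) (f : E → ℝ) (s : V) (a b : E → V)
    (hab : ∀ e, G.ends e = s(a e, b e)) (hne : ∀ e, a e ≠ b e)
    (h : ∀ v, v ≠ s → G.IsTypeO f v ∨ G.IsTypeI f v ∨ G.IsTypeH f v ∨ G.IsTypeT f v) :
    ∃ m : Dart E → Dart E, (∀ x, m (m x) = x) ∧ (∀ x, tl a b (m x) = tl a b x) ∧
      (∀ x, valid f x.1 x.2.1 → valid f (m x).1 (m x).2.1) ∧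
      (∀ x, valid f x.1 x.2.1 → tl a b x ≠ s → (m x).1 ≠ x.1) := by
  classical
  choose μ hμ using fun v : {v : V // v ≠ s} => copy_matching G f v.1 (h v.1 v.2)
  let δ : V → E × Bool → Dart E := fun v c => (c.1, c.2, decide (a c.1 = v))
  have tlδ : ∀ v c, v ∈ G.ends c.1 → tl a b (δ v c) = v := by
    intro v c hv
    rw [hab, Sym2.mem_iff] at hv
    simp only [tl, δ, decide_eq_true_eq]
    split_ifs with h1
    · exact h1
    · exact (hv.resolve_left (fun h => h1 h.symm)).symm
  have δtl : ∀ x : Dart E, δ (tl a b x) (x.1, x.2.1) = x := by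
    rintro ⟨e, i, d⟩
    cases d <;> simp [δ, tl, hne]
  have mem_tl : ∀ x : Dart E, tl a b x ∈ G.ends x.1 := by
    rintro ⟨e, i, d⟩
    rw [hab]
    cases d <;> simp [tl]
  let m : Dart E → Dart E := fun x =>
    if hx : valid f x.1 x.2.1 ∧ tl a b x ≠ s then
      δ (tl a b x) (μ ⟨tl a b x, hx.2⟩ (x.1, x.2.1)) else x
  have mpos : ∀ x (hx : valid f x.1 x.2.1 ∧ tl a b x ≠ s),
      m x = δ (tl a b x) (μ ⟨tl a b x, hx.2⟩ (x.1, x.2.1)) := fun x hx => dif_pos hx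
  have mneg : ∀ x, ¬ (valid f x.1 x.2.1 ∧ tl a b x ≠ s) → m x = x := fun x hx => dif_neg hx
  have mt : ∀ x, tl a b (m x) = tl a b x := by
    intro x
    by_cases hx : valid f x.1 x.2.1 ∧ tl a b x ≠ s
    · rw [mpos x hx]
      exact tlδ _ _ (hμ ⟨_, hx.2⟩ (x.1, x.2.1) (mem_tl x) hx.1).1
    · rw [mneg x hx]
  have mv : ∀ x, valid f x.1 x.2.1 → valid f (m x).1 (m x).2.1 := by
    intro x h0
    by_cases hx : valid f x.1 x.2.1 ∧ tl a b x ≠ s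
    · rw [mpos x hx]
      exact (hμ ⟨_, hx.2⟩ (x.1, x.2.1) (mem_tl x) hx.1).2.1
    · rw [mneg x hx]
      exact h0
  refine ⟨m, ?_, mt, mv, ?_⟩
  · intro x
    by_cases hx : valid f x.1 x.2.1 ∧ tl a b x ≠ s
    · have hx' : valid f (m x).1 (m x).2.1 ∧ tl a b (m x) ≠ s := ⟨mv x hx.1, by rw [mt]; exact hx.2⟩
      rw [mpos _ hx']
      have e1 : (⟨tl a b (m x), hx'.2⟩ : {v : V // v ≠ s}) = ⟨tl a b x, hx.2⟩ :=
        Subtype.ext (mt x)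
      rw [e1, mt]
      have e2 : ((m x).1, (m x).2.1) = μ ⟨tl a b x, hx.2⟩ (x.1, x.2.1) := by
        rw [mpos x hx]
      rw [e2, (hμ ⟨_, hx.2⟩ (x.1, x.2.1) (mem_tl x) hx.1).2.2.1]
      exact δtl x
    · rw [mneg x hx, mneg x hx]
  · intro x h0 h1
    rw [mpos x ⟨h0, h1⟩]
    exact (hμ ⟨_, h1⟩ (x.1, x.2.1) (mem_tl x) h0).2.2.2

/-- Tracing a trail from a dart leaving `s` until it first returns to `s`. -/
theorem trace [Finite E] (G : Multigraph V E) (f : E → ℝ) (s : V) (a b : E → V)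
    (hab : ∀ e, G.ends e = s(a e, b e))
    (m : Dart E → Dart E) (hmm : ∀ x, m (m x) = x) (hmt : ∀ x, tl a b (m x) = tl a b x)
    (hmv : ∀ x, valid f x.1 x.2.1 → valid f (m x).1 (m x).2.1)
    (hme : ∀ x, valid f x.1 x.2.1 → tl a b x ≠ s → (m x).1 ≠ x.1)
    (d : Dart E) (hd : valid f d.1 d.2.1) (hds : tl a b d = s) :
    ∃ (W : G.Walk) (n : ℕ), W.IsSCycle s ∧
      (∀ i, 0 < i → i < n → tl a b ((fun x => m (flip x))^[i] d) ≠ s) ∧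
      ∀ v, v ≠ s → W.vertCount v =
        Nat.card {i : Fin n // tl a b ((fun x => m (flip x))^[i] d) = v} := by
  classical
  set φ : Dart E → Dart E := fun x => m (flip x) with hφ
  have φinj : Function.Injective φ := by
    intro x y hxy
    have h1 : flip x = flip y := by
      rw [← hmm (flip x), ← hmm (flip y)]
      exact congrArg m hxy
    rw [← flip_flip x, ← flip_flip y, h1]
  have φval : ∀ i, valid f (φ^[i] d).1 (φ^[i] d).2.1 := by
    intro i
    induction i with
    | zero => exact hd
    | succ k ih =>
      rw [Function.iterate_succ_apply']
      exact hmv _ ih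
  have hret : ∃ n, 0 < n ∧ tl a b (φ^[n] d) = s := by
    obtain ⟨n, hn, hp⟩ := φinj.mem_periodicPts d
    exact ⟨n, hn, by rw [hp]; exact hds⟩
  let n := Nat.find hret
  have hn : 0 < n ∧ tl a b (φ^[n] d) = s := Nat.find_spec hret
  have hmin : ∀ i, 0 < i → i < n → tl a b (φ^[i] d) ≠ s := fun i hi hin h =>
    Nat.find_min hret hin ⟨hi, h⟩
  have hinj : ∀ i j, i < j → j < n → φ^[i] d ≠ φ^[j] d := by
    intro i j hij hj h
    have h2 : φ^[i] d = φ^[i] (φ^[j - i] d) := by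
      rw [← Function.iterate_add_apply, Nat.add_sub_cancel' hij.le]
      exact h
    have h3 := φinj.iterate i h2
    exact hmin (j - i) (by omega) (by omega) (by rw [← h3]; exact hds)
  have hflip : ∀ k i j, j - i = k → i ≤ j → j < n → flip (φ^[i] d) ≠ φ^[j] d := by
    intro k
    induction k using Nat.strong_induction_on with
    | _ k ih =>
      intro i j hk hij hj h
      rcases Nat.lt_or_ge (i + 1) j with hlt | hge
      · refine ih (j - 1 - (i + 1)) (by omega) (i + 1) (j - 1) rfl (by omega) (by omega) ?_
        obtain ⟨j, rfl⟩ : ∃ j', j = j' + 1 := ⟨j - 1, by omega⟩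
        rw [Function.iterate_succ_apply'] at h ⊢
        simp only [hφ, Nat.add_sub_cancel] at h ⊢
        rw [h, hmm, flip_flip]
      · rcases Nat.eq_or_lt_of_le hij with rfl | hlt
        · exact flip_ne _ h
        · obtain rfl : j = i + 1 := by omega
          have h1 := hme _ (φval (i + 1)) (hmin (i + 1) (by omega) hj)
          apply h1
          rw [← h]
          have : m (flip (φ^[i] d)) = φ^[i+1] d := (Function.iterate_succ_apply' φ i d).symm
          rw [this, ← h]
  have hcopy : ∀ i j, i < j → j < n →
      ((φ^[i] d).1, (φ^[i] d).2.1) ≠ ((φ^[j] d).1, (φ^[j] d).2.1) := by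
    intro i j hij hj h
    have h1 := hinj i j hij hj
    have h2 := hflip _ i j rfl hij.le hj
    generalize φ^[i] d = x at *
    generalize φ^[j] d = y at *
    obtain ⟨e, c, t⟩ := x
    obtain ⟨e', c', t'⟩ := y
    simp only [Prod.mk.injEq] at h
    obtain ⟨rfl, rfl⟩ := h
    simp only [flip] at h1 h2
    cases t <;> cases t' <;> simp_all
  let W : G.Walk :=
    { len := n
      len_pos := hn.1
      verts := fun i => tl a b (φ^[(i : ℕ)] d)
      edges := fun i => (φ^[(i : ℕ)] d).1
      valid := by
        intro i
        simp only [Fin.val_castSucc, Fin.val_succ]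
        rw [Function.iterate_succ_apply']
        generalize φ^[(i : ℕ)] d = x
        simp only [hφ]
        rw [hmt, hab]
        obtain ⟨e, c, t⟩ := x
        cases t <;> simp [tl, flip, Sym2.eq_swap] }
  refine ⟨W, n, ⟨hds, hn.2, ?_, ?_, ?_⟩, hmin, ?_⟩
  · intro i h0 hl
    have h1 : (i : ℕ) ≠ 0 := fun h => h0 (Fin.ext h)
    have h2 : (i : ℕ) ≠ n := fun h => hl (Fin.ext h)
    have h3 : (i : ℕ) < n + 1 := i.2
    exact hmin i (by omega) (by omega)
  · intro i j hij h
    have hj : (j : ℕ) < n := j.2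
    have h1 := hme _ (φval j) (hmin j (by omega) hj)
    have h' : (φ^[(i : ℕ)] d).1 = (φ^[(j : ℕ)] d).1 := h
    rw [← hij] at h1 h'
    rw [Function.iterate_succ_apply'] at h1 h'
    simp only [hφ] at h1 h'
    rw [hmm] at h1
    exact h1 h'
  · intro e
    have : Function.Injective
        (fun i : {i : Fin W.len // W.edges i = e} => (φ^[(i.1 : ℕ)] d).2.1) := by
      rintro ⟨i, hi⟩ ⟨j, hj⟩ h
      have hi' : (φ^[(i : ℕ)] d).1 = e := hi
      have hj' : (φ^[(j : ℕ)] d).1 = e := hj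
      have hin : (i : ℕ) < n := i.2
      have hjn : (j : ℕ) < n := j.2
      dsimp only at h
      rcases lt_trichotomy (i : ℕ) j with hlt | heq | hlt
      · exact absurd (by rw [hi', hj', h]) (hcopy i j hlt hjn)
      · exact Subtype.ext (Fin.ext heq)
      · exact absurd (by rw [hi', hj', h]) (hcopy j i hlt hin)
    have h2 := Nat.card_le_card_of_injective _ this
    simpa using h2
  · intro v hv
    apply Nat.card_congr
    have hlt : ∀ i : {i : Fin (W.len + 1) // W.verts i = v}, (i.1 : ℕ) < n := by
      rintro ⟨i, hi⟩
      have h3 : (i : ℕ) < n + 1 := i.2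
      have hi' : tl a b (φ^[(i : ℕ)] d) = v := hi
      rcases Nat.lt_or_ge (i : ℕ) n with h | h
      · exact h
      · exfalso
        have : (i : ℕ) = n := by omega
        rw [this, hn.2] at hi'
        exact hv hi'.symm
    exact
      { toFun := fun i => ⟨⟨i.1, hlt i⟩, i.2⟩
        invFun := fun i => ⟨⟨i.1, Nat.lt_succ_of_lt i.1.2⟩, i.2⟩
        left_inv := fun i => rfl
        right_inv := fun i => rfl }

theorem card_darts [Fintype E] (G : Multigraph V E) (f : E → ℝ) (a b : E → V)
    (hab : ∀ e, G.ends e = s(a e, b e)) (hne : ∀ e, a e ≠ b e)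
    (hf : ∀ e : E, f e = 0 ∨ f e = 1/2 ∨ f e = 1) (v : V) :
    (Nat.card {x : Dart E // valid f x.1 x.2.1 ∧ tl a b x = v} : ℝ) =
      2 * ∑ e : E, Set.indicator {e' : E | v ∈ G.ends e'} f e := by
  classical
  rw [Nat.card_eq_fintype_card, Fintype.card_subtype, Finset.card_filter, Finset.mul_sum]
  push_cast
  rw [Fintype.sum_prod_type]
  refine Finset.sum_congr rfl fun e _ => ?_
  rw [Fintype.sum_prod_type]
  simp only [Fintype.sum_bool, tl, valid, Set.indicator_apply, Set.mem_setOf_eq, hab,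
    Sym2.mem_iff]
  have h0 := hne e
  by_cases ha : a e = v
  · have hb : b e ≠ v := fun h => h0 (ha.trans h.symm)
    rcases hf e with h | h | h <;> norm_num [h, ha, hb]
  · by_cases hb : b e = v
    · rcases hf e with h | h | h <;> norm_num [h, ha, hb]
    · have ha' : v ≠ a e := fun h => ha h.symm
      have hb' : v ≠ b e := fun h => hb h.symm
      rcases hf e with h | h | h <;> norm_num [h, ha, hb, ha', hb']

theorem sum_le_two [Fintype E] (G : Multigraph V E) (f : E → ℝ)
    (hf : ∀ e : E, f e = 0 ∨ f e = 1/2 ∨ f e = 1) (v : V)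
    (h : G.IsTypeO f v ∨ G.IsTypeI f v ∨ G.IsTypeH f v ∨ G.IsTypeT f v) :
    ∑ e : E, Set.indicator {e' : E | v ∈ G.ends e'} f e ≤ 2 := by
  classical
  have key : ∑ e : E, Set.indicator {e' : E | v ∈ G.ends e'} f e =
      (G.cnt1 f v : ℝ) + (1/2) * (G.cntH f v : ℝ) := by
    unfold Multigraph.cnt1 Multigraph.cntH
    rw [Nat.card_eq_fintype_card, Fintype.card_subtype, Finset.card_filter,
      Nat.card_eq_fintype_card, Fintype.card_subtype, Finset.card_filter]
    push_cast
    rw [Finset.mul_sum, ← Finset.sum_add_distrib]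
    refine Finset.sum_congr rfl fun e _ => ?_
    simp only [Set.indicator_apply, Set.mem_setOf_eq]
    by_cases hv : v ∈ G.ends e
    · rcases hf e with h | h | h <;> norm_num [h, hv]
    · simp [hv]
  rcases h with h | ⟨h1, hH⟩ | ⟨h1, hH⟩ | ⟨h1, hH⟩
  · rw [Finset.sum_eq_zero]
    · norm_num
    · intro e _
      simp only [Set.indicator_apply, Set.mem_setOf_eq]
      split_ifs with hv
      · exact h e hv
      · rfl
  all_goals rw [key, h1, hH]; norm_num

end BasicPack

open BasicPack in
/-- a basic `s`-cycle packing of size `σ` yields an `s`-cycle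
packing of size `σ`. -/
theorem stmt10_basic_to_packing {V E : Type} [Fintype E] (G : Multigraph V E)
    (hloop : G.LoopFree) (s : V) (f : E → ℝ) (hf : G.IsBasicSCyclePacking s f)
    (σ : ℝ) (hσ : G.basicSize s f = σ) :
    ∃ y : G.Walk →₀ ℝ, G.IsSCyclePacking s y ∧ Multigraph.packingSize y = σ := by
  classical
  obtain ⟨hval, -, htype, -⟩ := hf
  have hex : ∀ e, ∃ p : V × V, G.ends e = s(p.1, p.2) := by
    intro e
    induction h : G.ends e using Sym2.inductionOn with
    | _ x y => exact ⟨(x, y), rfl⟩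
  choose p hp using hex
  let a : E → V := fun e => (p e).1
  let b : E → V := fun e => (p e).2
  have hab : ∀ e, G.ends e = s(a e, b e) := hp
  have hne : ∀ e, a e ≠ b e := by
    intro e h
    apply hloop e
    rw [hab, h]
    simp
  obtain ⟨m, hmm, hmt, hmv, hme⟩ := dart_matching G f s a b hab hne htype
  have htr := fun d : {x : Dart E // valid f x.1 x.2.1 ∧ tl a b x = s} =>
    trace G f s a b hab m hmm hmt hmv hme d.1 d.2.1 d.2.2
  choose W n hW hmin hcount using htr
  set φ : Dart E → Dart E := fun x => m (flip x) with hφ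
  have φinj : Function.Injective φ := by
    intro x y hxy
    have h1 : flip x = flip y := by
      rw [← hmm (flip x), ← hmm (flip y)]
      exact congrArg m hxy
    rw [← flip_flip x, ← flip_flip y, h1]
  have φval : ∀ d : Dart E, valid f d.1 d.2.1 → ∀ i, valid f (φ^[i] d).1 (φ^[i] d).2.1 := by
    intro d hd i
    induction i with
    | zero => exact hd
    | succ k ih =>
      rw [Function.iterate_succ_apply']
      exact hmv _ ih
  let y : G.Walk →₀ ℝ := ∑ d, Finsupp.single (W d) (1/4 : ℝ)
  have hy : ∀ w, y w = ∑ d, if W d = w then (1/4 : ℝ) else 0 := by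
    intro w
    simp only [y, Finsupp.finsetSum_apply, Finsupp.single_apply]
  have hysum : ∀ c : G.Walk → ℝ, ∑ w ∈ y.support, c w * y w = ∑ d, c (W d) * (1/4) := by
    intro c
    have h1 : y.sum (fun w r => c w * r) = ∑ d, c (W d) * (1/4) := by
      rw [← Finsupp.sum_finset_sum_index]
      · refine Finset.sum_congr rfl fun d _ => ?_
        rw [Finsupp.sum_single_index]
        simp
      · intro; simp
      · intro w r t; ring
    exact h1
  refine ⟨y, ⟨?_, ?_, ?_⟩, ?_⟩
  · intro w
    rw [hy]
    refine Finset.sum_nonneg fun d _ => ?_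
    split_ifs <;> norm_num
  · intro w hw
    rw [hy] at hw
    obtain ⟨d, -, hd⟩ := Finset.exists_ne_zero_of_sum_ne_zero hw
    have : W d = w := by
      by_contra h
      simp [h] at hd
    rw [← this]
    exact hW d
  · intro v hv
    rw [hysum (fun w => (w.vertCount v : ℝ)), ← Finset.sum_mul]
    have hle : (∑ d, (W d).vertCount v : ℕ) ≤
        Nat.card {x : Dart E // valid f x.1 x.2.1 ∧ tl a b x = v} := by
      have : (∑ d, (W d).vertCount v : ℕ) =
          Nat.card (Σ d, {i : Fin (n d) // tl a b (φ^[i] d.1) = v}) := by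
        rw [Nat.card_sigma]
        exact Finset.sum_congr rfl fun d _ => hcount d v hv
      rw [this]
      have hinj : ∀ (d d' : {x : Dart E // valid f x.1 x.2.1 ∧ tl a b x = s}) (i j : ℕ),
          i ≤ j → j < n d' → φ^[i] d.1 = φ^[j] d'.1 → d = d' ∧ i = j := by
        intro d d' i j hij hj h
        have h2 : φ^[i] d.1 = φ^[i] (φ^[j - i] d'.1) := by
          rw [← Function.iterate_add_apply, Nat.add_sub_cancel' hij]
          exact h
        have h3 := φinj.iterate i h2
        have h4 : j - i = 0 := by
          by_contra h0
          exact hmin d' (j - i) (by omega) (by omega) (by rw [← h3]; exact d.2.2)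
        rw [h4] at h3
        exact ⟨Subtype.ext h3, by omega⟩
      refine Nat.card_le_card_of_injective
        (fun q => ⟨φ^[q.2.1] q.1.1, φval _ q.1.2.1 _, q.2.2⟩) ?_
      rintro ⟨d, ⟨⟨i, hi⟩, hi'⟩⟩ ⟨d', ⟨⟨j, hj⟩, hj'⟩⟩ h
      have h : φ^[i] d.1 = φ^[j] d'.1 := congrArg Subtype.val h
      have : d = d' ∧ i = j := by
        rcases le_total i j with hij | hij
        · exact hinj d d' i j hij hj h
        · have := hinj d' d j i hij hi h.symm
          exact ⟨this.1.symm, this.2.symm⟩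
      obtain ⟨rfl, rfl⟩ := this
      rfl
    have h1 := card_darts G f a b hab hne hval v
    have h2 := sum_le_two G f hval v (htype v hv)
    have h3 : (∑ d, ((W d).vertCount v : ℝ)) ≤
        (Nat.card {x : Dart E // valid f x.1 x.2.1 ∧ tl a b x = v} : ℝ) := by
      exact_mod_cast hle
    linarith
  · have h1 := hysum (fun _ => 1)
    simp only [one_mul] at h1
    unfold Multigraph.packingSize
    rw [h1, Finset.sum_const, Finset.card_univ, nsmul_eq_mul, ← Nat.card_eq_fintype_card,
      card_darts G f a b hab hne hval s, ← hσ]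
    unfold Multigraph.basicSize
    ring
end

section
/- Let G=(V,E) be a multigraph without self-loops and let s ∈ V. For every basic s-cycle packing f of G and every s-cycle cover x of G, the size of f is at most the size of x, i.e., (1/2)·Σ_{e incident to s} f(e) ≤ Σ_{v∈V} x(v). -/
namespace BasicLeCover

open Multigraph

theorem orient {V E : Type} [Finite V] [Finite E] (G : Multigraph V E)
    (hloop : G.LoopFree) (H : E → Prop)
    (hH : ∀ v e, H e → v ∈ G.ends e → ∃ e', ∀ e'', (H e'' ∧ v ∈ G.ends e'' ∧ e'' ≠ e) ↔ e'' = e') :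
    ∃ D : E → V → V → Prop,
      (∀ e u v, H e → G.ends e = s(u, v) → (D e u v ↔ ¬ D e v u)) ∧
      (∀ e e' u v w, e ≠ e' → H e → H e' → G.ends e = s(u, v) → G.ends e' = s(v, w) →
        (D e u v ↔ D e' v w)) := by
  classical
  let A := {d : E × V × V // H d.1 ∧ G.ends d.1 = s(d.2.1, d.2.2)}
  let r : A → A := fun d => ⟨(d.1.1, d.1.2.2, d.1.2.1), d.2.1, by rw [d.2.2]; exact Sym2.eq_swap⟩
  have hex : ∀ d : A, ∃ d' : A, d'.1.2.1 = d.1.2.2 ∧ d'.1.1 ≠ d.1.1 := by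
    rintro ⟨⟨e, u, v⟩, he, hend⟩
    simp only at he hend
    obtain ⟨e', h'⟩ := hH v e he (by rw [hend]; simp)
    obtain ⟨h1, h2, h3⟩ := (h' e').2 rfl
    obtain ⟨w, hw⟩ := Sym2.mem_iff_exists.1 h2
    exact ⟨⟨(e', v, w), h1, hw⟩, rfl, h3⟩
  choose σ hσ1 hσ2 using hex
  have ext' : ∀ d d' : A, d.1.1 = d'.1.1 → d.1.2.2 = d'.1.2.2 → d = d' := by
    rintro ⟨⟨e, u, v⟩, he, hend⟩ ⟨⟨e', u', v'⟩, he', hend'⟩ h1 h2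
    simp only at h1 h2 hend hend'
    subst h1 h2
    rw [hend] at hend'
    have : u = u' := by
      rw [Sym2.eq_swap, Sym2.eq_swap (a := u')] at hend'
      exact Sym2.congr_right.1 hend'
    subst this; rfl
  have ext2 : ∀ d d' : A, d.1.1 = d'.1.1 → d.1.2.1 = d'.1.2.1 → d = d' := by
    rintro ⟨⟨e, u, v⟩, he, hend⟩ ⟨⟨e', u', v'⟩, he', hend'⟩ h1 h2
    simp only at h1 h2 hend hend'
    subst h1 h2
    rw [hend] at hend'
    have := Sym2.congr_right.1 hend'
    subst this; rfl
  have mem1 : ∀ d : A, d.1.2.1 ∈ G.ends d.1.1 := fun d => by rw [d.2.2]; simp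
  have mem2 : ∀ d : A, d.1.2.2 ∈ G.ends d.1.1 := fun d => by rw [d.2.2]; simp
  have uniq : ∀ v e e1 e2, H e → H e1 → H e2 → v ∈ G.ends e → v ∈ G.ends e1 → v ∈ G.ends e2 →
      e1 ≠ e → e2 ≠ e → e1 = e2 := by
    intro v e e1 e2 h h1 h2 m m1 m2 n1 n2
    obtain ⟨e', h'⟩ := hH v e h m
    rw [(h' e1).1 ⟨h1, m1, n1⟩, (h' e2).1 ⟨h2, m2, n2⟩]
  have σuniq : ∀ d d' : A, d'.1.2.1 = d.1.2.2 → d'.1.1 ≠ d.1.1 → d' = σ d := by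
    intro d d' h1 h2
    refine ext2 _ _ ?_ (by rw [h1, hσ1])
    exact uniq d.1.2.2 d.1.1 _ _ d.2.1 d'.2.1 (σ d).2.1 (mem2 d) (h1 ▸ mem1 d')
      (hσ1 d ▸ mem1 (σ d)) h2 (hσ2 d)
  have hinj : Function.Injective σ := by
    intro d d' h
    have hh : d.1.2.2 = d'.1.2.2 := by rw [← hσ1, ← hσ1, h]
    refine ext' _ _ ?_ hh
    exact uniq d.1.2.2 (σ d).1.1 _ _ (σ d).2.1 d.2.1 d'.2.1 (hσ1 d ▸ mem1 (σ d)) (mem2 d)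
      (hh ▸ mem2 d') (hσ2 d).symm (h ▸ (hσ2 d').symm)
  have hrel : ∀ d, σ (r (σ d)) = r d := by
    intro d
    exact (σuniq (r (σ d)) (r d) (hσ1 d).symm (hσ2 d).symm).symm
  have hne : ∀ k d, r d ≠ σ^[k] d := by
    intro k
    induction k using Nat.strong_induction_on with
    | _ k ih =>
      intro d h
      match k, ih, h with
      | 0, _, h =>
        have : d.1.2.2 = d.1.2.1 := congrArg (fun z : A => z.1.2.1) h
        apply hloop d.1.1
        rw [d.2.2, this]; simp
      | 1, _, h =>
        exact hσ2 d (congrArg (fun z : A => z.1.1) h).symm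
      | k+2, ih, h =>
        refine ih k (by omega) (σ d) (hinj ?_)
        rw [hrel, h, Function.iterate_succ_apply, Function.iterate_succ_apply']
  let τ : Equiv.Perm A := Equiv.ofBijective σ (Finite.injective_iff_bijective.1 hinj)
  have hτ : ∀ d, τ d = σ d := fun d => rfl
  let Q := Quotient (Equiv.Perm.SameCycle.setoid τ)
  let mk : A → Q := Quotient.mk _
  have hmk : ∀ d d', mk d = mk d' ↔ τ.SameCycle d d' := fun d d' => Quotient.eq
  obtain ⟨c, hc⟩ := Countable.exists_injective_nat Q
  have hmkσ : ∀ d, mk (σ d) = mk d := by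
    intro d
    rw [hmk, ← hτ]
    exact (Equiv.Perm.SameCycle.refl τ d).apply_left
  have hmkr : ∀ d, mk (r (σ d)) = mk (r d) := by
    intro d
    rw [← hmkσ, hrel]
  have hmkne : ∀ d, mk d ≠ mk (r d) := by
    intro d h
    rw [hmk] at h
    obtain ⟨k, _, hk⟩ := h.exists_pow_eq'
    apply hne k d
    rw [← hk]
    have : ∀ k : ℕ, (τ ^ k) d = σ^[k] d := by
      intro k
      rw [← Equiv.Perm.iterate_eq_pow]; rfl
    exact this k
  refine ⟨fun e u v => ∃ h : H e ∧ G.ends e = s(u, v),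
    c (mk ⟨(e, u, v), h⟩) < c (mk (r ⟨(e, u, v), h⟩)), ?_, ?_⟩
  · intro e u v he hend
    have hend' : G.ends e = s(v, u) := by rw [hend]; exact Sym2.eq_swap
    have h1 := hmkne ⟨(e, u, v), he, hend⟩
    have h2 : c (mk ⟨(e, u, v), he, hend⟩) ≠ c (mk (r ⟨(e, u, v), he, hend⟩)) := fun h => h1 (hc h)
    have h3 : r ⟨(e, u, v), he, hend⟩ = ⟨(e, v, u), he, hend'⟩ := rfl
    have h4 : r ⟨(e, v, u), he, hend'⟩ = ⟨(e, u, v), he, hend⟩ := rfl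
    rw [h3] at h2
    constructor
    · rintro ⟨_, h⟩ ⟨_, h'⟩
      rw [h3] at h
      rw [h4] at h'
      omega
    · intro h
      refine ⟨⟨he, hend⟩, ?_⟩
      by_contra hcon
      apply h
      refine ⟨⟨he, hend'⟩, ?_⟩
      rw [h3] at hcon
      rw [h4]
      omega
  · intro e e' u v w hee he he' hend hend'
    have := σuniq ⟨(e, u, v), he, hend⟩ ⟨(e', v, w), he', hend'⟩ rfl hee.symm
    have h1 := hmkσ ⟨(e, u, v), he, hend⟩
    have h2 := hmkr ⟨(e, u, v), he, hend⟩
    rw [← this] at h1 h2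
    constructor
    · rintro ⟨_, h⟩
      refine ⟨⟨he', hend'⟩, ?_⟩
      rw [h1, h2]; exact h
    · rintro ⟨_, h⟩
      refine ⟨⟨he, hend⟩, ?_⟩
      rw [h1, h2] at h; exact h

theorem orbit_sum {A : Type} [Fintype A] (π : A → A) (hπ : Function.Injective π)
    (Z : Finset A) (y : A → ℝ) (hy : ∀ a, 0 ≤ y a) (l : A → ℕ)
    (hl : ∀ a ∈ Z, ∀ j, 0 < j → j < l a → π^[j] a ∉ Z) :
    ∑ a ∈ Z, ∑ i ∈ Finset.range (l a), y (π^[i] a) ≤ ∑ a, y a := by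
  classical
  rw [Finset.sum_sigma' (f := fun a i => y (π^[i] a))]
  have key : ∀ a ∈ Z, ∀ b ∈ Z, ∀ i j, j < l b → i ≤ j → π^[i] a = π^[j] b → a = b ∧ i = j := by
    intro a ha b hb i j hj hij h
    obtain ⟨k, rfl⟩ := Nat.exists_eq_add_of_le hij
    rw [Function.iterate_add_apply] at h
    have h' := hπ.iterate i h
    rcases Nat.eq_zero_or_pos k with rfl | hk
    · exact ⟨h', rfl⟩
    · exact absurd (h' ▸ ha) (hl b hb k hk (by omega))
  have hinj : Set.InjOn (fun p : (_ : A) × ℕ => π^[p.2] p.1)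
      (Z.sigma fun a => Finset.range (l a)) := by
    rintro ⟨a, i⟩ h1 ⟨b, j⟩ h2 h
    simp only [Finset.coe_sigma, Set.mem_sigma_iff, Finset.mem_coe, Finset.mem_range] at h1 h2 h
    rcases le_total i j with hij | hij
    · obtain ⟨rfl, rfl⟩ := key a h1.1 b h2.1 i j h2.2 hij h
      rfl
    · obtain ⟨rfl, rfl⟩ := key b h2.1 a h1.1 j i h1.2 hij h.symm
      rfl
  rw [← Finset.sum_image (f := y) hinj]
  exact Finset.sum_le_sum_of_subset_of_nonneg (Finset.subset_univ _) (fun a _ _ => hy a)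

/-- The darts used by the face-tracing argument. -/
def P {V E : Type} (G : Multigraph V E) (f : E → ℝ) (D : E → V → V → Prop) (e : E) (u v : V) :
    Prop :=
  G.ends e = s(u, v) ∧ (f e = 1 ∨ f e = 1/2 ∧ D e u v)

theorem local_step {V E : Type} [Finite V] [Finite E] (G : Multigraph V E)
    (s : V) (f : E → ℝ) (hf : G.IsBasicSCyclePacking s f)
    (D : E → V → V → Prop)
    (hD1 : ∀ e u v, f e = 1/2 → G.ends e = s(u, v) → (D e u v ↔ ¬ D e v u))
    (hD2 : ∀ e e' u v w, e ≠ e' → f e = 1/2 → f e' = 1/2 → G.ends e = s(u, v) →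
        G.ends e' = s(v, w) → (D e u v ↔ D e' v w)) (v : V) (hv : v ≠ s) :
    ∃ (g : E → E) (S : Finset E), S.card ≤ 2 ∧
      (∀ e u, P G f D e u v → ∃ w, P G f D (g e) v w ∧ g e ≠ e) ∧
      (∀ e e' u u', P G f D e u v → P G f D e' u' v → g e = g e' → e = e') ∧
      (∀ e w, P G f D e v w → e ∈ S) := by
  classical
  have one : G.cnt1 f v = Set.ncard {e : E | v ∈ G.ends e ∧ f e = 1} := rfl
  have half : G.cntH f v = Set.ncard {e : E | v ∈ G.ends e ∧ f e = 1/2} := rfl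
  have pin : ∀ e u, P G f D e u v → v ∈ G.ends e := fun e u h => by rw [h.1]; simp
  have pout : ∀ e u, P G f D e v u → v ∈ G.ends e := fun e u h => by rw [h.1]; simp
  -- two half edges : one in, one out
  have halfsplit : G.cntH f v = 2 → ∃ a b wb, f a = 1/2 ∧ f b = 1/2 ∧ a ≠ b ∧
      (∀ e u, P G f D e u v → f e = 1/2 → e = a) ∧ P G f D b v wb ∧
      (∀ e u, P G f D e v u → f e = 1/2 → e = b) := by
    intro h2
    rw [half, Set.ncard_eq_two] at h2
    obtain ⟨a, b, hab, hset⟩ := h2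
    have hmem : ∀ e, v ∈ G.ends e → f e = 1/2 → e = a ∨ e = b := by
      intro e h h'
      have : e ∈ ({a, b} : Set E) := hset ▸ (⟨h, h'⟩ : _ ∧ _)
      simpa using this
    have ha : v ∈ G.ends a ∧ f a = 1/2 := by
      have : a ∈ {e : E | v ∈ G.ends e ∧ f e = 1/2} := by rw [hset]; simp
      exact this
    have hb : v ∈ G.ends b ∧ f b = 1/2 := by
      have : b ∈ {e : E | v ∈ G.ends e ∧ f e = 1/2} := by rw [hset]; simp
      exact this
    -- WLOG form
    have main : ∀ a b, a ≠ b → (v ∈ G.ends a ∧ f a = 1/2) → (v ∈ G.ends b ∧ f b = 1/2) →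
        (∀ e, v ∈ G.ends e → f e = 1/2 → e = a ∨ e = b) →
        (∃ u, G.ends a = s(u, v) ∧ D a u v) → ∃ a b wb, f a = 1/2 ∧ f b = 1/2 ∧ a ≠ b ∧
      (∀ e u, P G f D e u v → f e = 1/2 → e = a) ∧ P G f D b v wb ∧
      (∀ e u, P G f D e v u → f e = 1/2 → e = b) := by
      rintro a b hab ha hb hmem ⟨u, hu, hDu⟩
      obtain ⟨w, hw⟩ := Sym2.mem_iff_exists.1 hb.1
      have hDw : D b v w := (hD2 a b u v w hab ha.2 hb.2 hu hw).1 hDu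
      have hw' : G.ends b = s(w, v) := by rw [hw]; exact Sym2.eq_swap
      have hu' : G.ends a = s(v, u) := by rw [hu]; exact Sym2.eq_swap
      refine ⟨a, b, w, ha.2, hb.2, hab, ?_, ⟨hw, Or.inr ⟨hb.2, hDw⟩⟩, ?_⟩
      · intro e z hP he
        rcases hmem e (pin e z hP) he with rfl | rfl
        · rfl
        · exfalso
          have hz : z = w := by
            have := hP.1.symm.trans hw
            rw [Sym2.eq_swap] at this
            exact Sym2.congr_right.1 this
          subst hz
          rcases hP.2 with h | h
          · rw [h] at he; norm_num at he
          · exact (hD1 e v z he hw).1 hDw h.2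
      · intro e z hP he
        rcases hmem e (pout e z hP) he with rfl | rfl
        · exfalso
          have hz : z = u := by
            have := hP.1.symm.trans hu'
            exact Sym2.congr_right.1 this
          subst hz
          rcases hP.2 with h | h
          · rw [h] at he; norm_num at he
          · exact (hD1 e z v he hu).1 hDu h.2
        · rfl
    obtain ⟨u, hu⟩ := Sym2.mem_iff_exists.1 ha.1
    have hu' : G.ends a = s(u, v) := by rw [hu]; exact Sym2.eq_swap
    by_cases hDu : D a u v
    · exact main a b hab ha hb hmem ⟨u, hu', hDu⟩
    · obtain ⟨w, hw⟩ := Sym2.mem_iff_exists.1 hb.1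
      have hw' : G.ends b = s(w, v) := by rw [hw]; exact Sym2.eq_swap
      refine main b a hab.symm hb ha (fun e h h' => (hmem e h h').symm) ⟨w, hw', ?_⟩
      rw [hD1 b w v hb.2 hw', ← hD2 a b u v w hab ha.2 hb.2 hu' hw]
      exact hDu
  have val : ∀ e u w, P G f D e u w → f e = 1 ∨ f e = 1/2 := fun e u w h => h.2.imp id And.left
  have out1 : ∀ e, v ∈ G.ends e → f e = 1 → ∃ w, P G f D e v w := by
    intro e h h1
    obtain ⟨w, hw⟩ := Sym2.mem_iff_exists.1 h
    exact ⟨w, hw, Or.inl h1⟩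
  rcases hf.2.2.1 v hv with hO | hI | hH | hT
  · have no : ∀ e, v ∈ G.ends e → ∀ u w, ¬ P G f D e u w := by
      intro e h u w hP
      have := hO e h
      rcases val e u w hP with h | h <;> rw [this] at h <;> norm_num at h
    refine ⟨id, ∅, by simp, ?_, ?_, ?_⟩
    · intro e u h; exact absurd h (no e (pin e u h) _ _)
    · intro e e' u u' h; exact absurd h (no e (pin e u h) _ _)
    · intro e u h; exact absurd h (no e (pout e u h) _ _)
  · obtain ⟨h2, h0⟩ := hI
    rw [one, Set.ncard_eq_two] at h2
    obtain ⟨a, b, hab, hset⟩ := h2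
    rw [half, Set.ncard_eq_zero] at h0
    have hmem : ∀ e u w, v ∈ G.ends e → P G f D e u w → e = a ∨ e = b := by
      intro e u w h hP
      rcases val e u w hP with h1 | h1
      · have : e ∈ ({a, b} : Set E) := hset ▸ (⟨h, h1⟩ : _ ∧ _)
        simpa using this
      · have : e ∈ (∅ : Set E) := h0 ▸ (⟨h, h1⟩ : _ ∧ _)
        simp at this
    have ha : v ∈ G.ends a ∧ f a = 1 := by
      have : a ∈ {e : E | v ∈ G.ends e ∧ f e = 1} := by rw [hset]; simp
      exact this
    have hb : v ∈ G.ends b ∧ f b = 1 := by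
      have : b ∈ {e : E | v ∈ G.ends e ∧ f e = 1} := by rw [hset]; simp
      exact this
    refine ⟨fun e => if e = a then b else a, {a, b}, Finset.card_le_two, ?_, ?_, ?_⟩
    · intro e u h
      rcases hmem e u v (pin e u h) h with rfl | rfl
      · obtain ⟨w, hw⟩ := out1 b hb.1 hb.2
        exact ⟨w, by simpa using hw, by simpa using hab.symm⟩
      · obtain ⟨w, hw⟩ := out1 a ha.1 ha.2
        exact ⟨w, by simpa [hab.symm] using hw, by simpa [hab.symm] using hab⟩
    · intro e e' u u' h h' hg
      have h1 := hmem e u v (pin e u h) h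
      have h2 := hmem e' u' v (pin e' u' h') h'
      clear hmem h h' hset
      simp only at hg
      grind
    · intro e u h
      simpa using hmem e v u (pout e u h) h
  · obtain ⟨h0, h2⟩ := hH
    obtain ⟨a, b, w, fa, fb, hab, hin, hPb, hout⟩ := halfsplit h2
    rw [one, Set.ncard_eq_zero] at h0
    have hh : ∀ e u w, v ∈ G.ends e → P G f D e u w → f e = 1/2 := by
      intro e u w h hP
      rcases val e u w hP with h1 | h1
      · have : e ∈ (∅ : Set E) := h0 ▸ (⟨h, h1⟩ : _ ∧ _)
        simp at this
      · exact h1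
    refine ⟨fun _ => b, {b}, by simp, ?_, ?_, ?_⟩
    · intro e u h
      have := hin e u h (hh e u v (pin e u h) h)
      subst this
      exact ⟨w, hPb, hab.symm⟩
    · intro e e' u u' h h' _
      rw [hin e u h (hh e u v (pin e u h) h), hin e' u' h' (hh e' u' v (pin e' u' h') h')]
    · intro e u h
      simpa using hout e u h (hh e v u (pout e u h) h)
  · obtain ⟨h1, h2⟩ := hT
    obtain ⟨a, b, w, fa, fb, hab, hin, hPb, hout⟩ := halfsplit h2
    rw [one, Set.ncard_eq_one] at h1
    obtain ⟨p, hset⟩ := h1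
    have hp : v ∈ G.ends p ∧ f p = 1 := by
      have : p ∈ {e : E | v ∈ G.ends e ∧ f e = 1} := by rw [hset]; simp
      exact this
    have hone : ∀ e, v ∈ G.ends e → f e = 1 → e = p := by
      intro e h h1
      have : e ∈ ({p} : Set E) := hset ▸ (⟨h, h1⟩ : _ ∧ _)
      simpa using this
    have hi : ∀ e u, P G f D e u v → e = p ∨ e = a := by
      intro e u h
      rcases val _ _ _ h with h1 | h1
      · exact Or.inl (hone e (pin e u h) h1)
      · exact Or.inr (hin e u h h1)
    have hpa : p ≠ a := by rintro rfl; rw [fa] at hp; norm_num at hp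
    have hpb : p ≠ b := by rintro rfl; rw [fb] at hp; norm_num at hp
    refine ⟨fun e => if e = p then b else p, {p, b}, Finset.card_le_two, ?_, ?_, ?_⟩
    · intro e u h
      rcases hi e u h with rfl | rfl
      · exact ⟨w, by simpa using hPb, by simpa using hpb.symm⟩
      · obtain ⟨w, hw⟩ := out1 p hp.1 hp.2
        exact ⟨w, by simpa [hpa.symm] using hw, by simpa [hpa.symm] using hpa⟩
    · intro e e' u u' h h' hg
      have h1 := hi e u h
      have h2 := hi e' u' h'
      simp only at hg
      grind
    · intro e u h
      rcases val _ _ _ h with h1 | h1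
      · simp [hone e (pout e u h) h1]
      · simp [hout e u h h1]

theorem main {V E : Type} [Fintype V] [Fintype E] (G : Multigraph V E)
    (hloop : G.LoopFree) (s : V) (f : E → ℝ) (hf : G.IsBasicSCyclePacking s f)
    (x : V → ℝ) (hx : G.IsSCycleCover s x) :
    G.basicSize s f ≤ ∑ v, x v := by
  classical
  obtain ⟨D, hD1, hD2⟩ := orient G hloop (fun e => f e = 1/2) (by
    intro v e he hve
    have hvs : v ≠ s := by
      rintro rfl
      rcases hf.2.1 e hve with h | h <;> rw [h] at he <;> norm_num at he
    have h2 : G.cntH f v = 2 := by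
      rcases hf.2.2.1 v hvs with hO | hI | hH | hT
      · have := hO e hve
        rw [this] at he; norm_num at he
      · have h0 : Set.ncard {e : E | v ∈ G.ends e ∧ f e = 1/2} = 0 := hI.2
        rw [Set.ncard_eq_zero] at h0
        have : e ∈ (∅ : Set E) := h0 ▸ (⟨hve, he⟩ : _ ∧ _)
        simp at this
      · exact hH.2
      · exact hT.2
    have h2' : Set.ncard {e : E | v ∈ G.ends e ∧ f e = 1/2} = 2 := h2
    rw [Set.ncard_eq_two] at h2'
    obtain ⟨a, b, hab, hset⟩ := h2'
    have hm : ∀ e, (v ∈ G.ends e ∧ f e = 1/2) ↔ (e = a ∨ e = b) := by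
      intro e
      have := Set.ext_iff.1 hset e
      simpa using this
    rcases (hm e).1 ⟨hve, he⟩ with rfl | rfl
    · refine ⟨b, fun e'' => ?_⟩
      have := hm e''
      constructor
      · rintro ⟨h1, h2, h3⟩
        exact (this.1 ⟨h2, h1⟩).resolve_left h3
      · intro h
        have h' := this.2 (Or.inr h)
        exact ⟨h'.2, h'.1, h ▸ hab.symm⟩
    · refine ⟨a, fun e'' => ?_⟩
      have := hm e''
      constructor
      · rintro ⟨h1, h2, h3⟩
        exact (this.1 ⟨h2, h1⟩).resolve_right h3
      · intro h
        have h' := this.2 (Or.inl h)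
        exact ⟨h'.2, h'.1, h ▸ hab⟩)
  have hs1 : ∀ e u v, P G f D e u v → s ∈ G.ends e → f e = 1 := by
    intro e u v h hse
    rcases hf.2.1 e hse with h0 | h0
    · rcases h.2 with h | h
      · exact h
      · rw [h.1] at h0; norm_num at h0
    · exact h0
  have hstep : ∀ v, ∃ (g : E → E) (S : Finset E), (v ≠ s → S.card ≤ 2) ∧
      (∀ e u, P G f D e u v → ∃ w, P G f D (g e) v w ∧ (v ≠ s → g e ≠ e)) ∧
      (∀ e e' u u', P G f D e u v → P G f D e' u' v → g e = g e' → e = e') ∧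
      (∀ e w, P G f D e v w → e ∈ S) := by
    intro v
    by_cases hv : v = s
    · subst hv
      refine ⟨id, Finset.univ, fun h => absurd rfl h, ?_, fun _ _ _ _ _ _ h => h, by simp⟩
      intro e u h
      refine ⟨u, ⟨by rw [id, h.1]; exact Sym2.eq_swap, Or.inl ?_⟩, fun h => absurd rfl h⟩
      exact hs1 e u v h (by rw [h.1]; simp)
    · obtain ⟨g, S, h1, h2, h3, h4⟩ := local_step G s f hf D hD1 hD2 v hv
      refine ⟨g, S, fun _ => h1, ?_, h3, h4⟩
      intro e u h
      obtain ⟨w, hw, hne⟩ := h2 e u h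
      exact ⟨w, hw, fun _ => hne⟩
  choose g S hS hg hginj hgS using hstep
  let A := {d : E × V × V // P G f D d.1 d.2.1 d.2.2}
  have hex : ∀ d : A, ∃ d' : A, d'.1.1 = g d.1.2.2 d.1.1 ∧ d'.1.2.1 = d.1.2.2 ∧
      (d.1.2.2 ≠ s → d'.1.1 ≠ d.1.1) := by
    rintro ⟨⟨e, u, v⟩, h⟩
    obtain ⟨w, hw, hne⟩ := hg v e u h
    exact ⟨⟨(g v e, v, w), hw⟩, rfl, rfl, hne⟩
  choose π hπ1 hπ2 hπ3 using hex
  have ext1 : ∀ d d' : A, d.1.1 = d'.1.1 → d.1.2.2 = d'.1.2.2 → d = d' := by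
    rintro ⟨⟨e, u, v⟩, hend⟩ ⟨⟨e', u', v'⟩, hend'⟩ h1 h2
    simp only at h1 h2 hend hend'
    subst h1 h2
    have h := hend.1.symm.trans hend'.1
    have : u = u' := by
      rw [Sym2.eq_swap, Sym2.eq_swap (a := u')] at h
      exact Sym2.congr_right.1 h
    subst this; rfl
  have ext2 : ∀ d d' : A, d.1.1 = d'.1.1 → d.1.2.1 = d'.1.2.1 → d = d' := by
    rintro ⟨⟨e, u, v⟩, hend⟩ ⟨⟨e', u', v'⟩, hend'⟩ h1 h2
    simp only at h1 h2 hend hend'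
    subst h1 h2
    have := Sym2.congr_right.1 (hend.1.symm.trans hend'.1)
    subst this; rfl
  have hπ : Function.Injective π := by
    intro d d' h
    have hh : d.1.2.2 = d'.1.2.2 := by rw [← hπ2, ← hπ2, h]
    refine ext1 _ _ ?_ hh
    apply hginj d.1.2.2 d.1.1 d'.1.1 d.1.2.1 d'.1.2.1 d.2 (hh ▸ d'.2)
    rw [← hπ1, h, hπ1, hh]
  have hret : ∀ d : A, ∃ n, d.1.2.1 = s → 0 < n ∧ (π^[n] d).1.2.1 = s := by
    intro d
    obtain ⟨n, hn, hp⟩ := hπ.mem_periodicPts d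
    exact ⟨n, fun h => ⟨hn, by rw [hp.eq]; exact h⟩⟩
  let l : A → ℕ := fun d => Nat.find (hret d)
  have hl : ∀ d : A, d.1.2.1 = s → 0 < l d ∧ (π^[l d] d).1.2.1 = s :=
    fun d => Nat.find_spec (hret d)
  have hlmin : ∀ d : A, d.1.2.1 = s → ∀ j, 0 < j → j < l d → (π^[j] d).1.2.1 ≠ s := by
    intro d hd j hj hjl h
    exact Nat.find_min (hret d) hjl (fun _ => ⟨hj, h⟩)
  let Z : Finset A := Finset.univ.filter fun d => d.1.2.1 = s
  have hZ : ∀ d, d ∈ Z ↔ d.1.2.1 = s := fun d => by simp [Z]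
  have hsum := orbit_sum π hπ Z (fun d => x d.1.2.1) (fun d => hx.1 _) l (by
    intro a ha j hj hjl h
    exact hlmin a ((hZ a).1 ha) j hj hjl ((hZ _).1 h))
  -- each orbit gives an s-cycle
  have hcyc : ∀ d ∈ Z, 1 ≤ ∑ i ∈ Finset.range (l d), x (π^[i] d).1.2.1 := by
    intro d hd
    rw [hZ] at hd
    have nxt : ∀ i, (π^[i] d).1.2.2 = (π^[i+1] d).1.2.1 := by
      intro i
      rw [Function.iterate_succ_apply', hπ2]
    let W : G.Walk :=
      { len := l d
        len_pos := (hl d hd).1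
        verts := fun i => (π^[i.val] d).1.2.1
        edges := fun i => (π^[i.val] d).1.1
        valid := by
          intro i
          have := (π^[i.val] d).2.1
          rw [nxt] at this
          exact this }
    have hinj : ∀ i j, i ≤ j → j < l d → π^[i] d = π^[j] d → i = j := by
      intro i j hij hj h
      obtain ⟨k, rfl⟩ := Nat.exists_eq_add_of_le hij
      rw [Function.iterate_add_apply] at h
      have h' := hπ.iterate i h
      rcases Nat.eq_zero_or_pos k with rfl | hk
      · rfl
      · exact absurd (h' ▸ hd) (hlmin d hd k hk (by omega))
    have hW : W.IsSCycle s := by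
      refine ⟨hd, (hl d hd).2, ?_, ?_, ?_⟩
      · intro i h0 h1
        apply hlmin d hd i.val
        · rw [Nat.pos_iff_ne_zero]
          intro h; exact h0 (Fin.ext h)
        · have := i.isLt
          have h2 : i.val ≠ l d := fun h => h1 (Fin.ext h)
          have h3 : W.len = l d := rfl
          omega
      · intro i j hij
        show (π^[i.val] d).1.1 ≠ (π^[j.val] d).1.1
        rw [← hij, Function.iterate_succ_apply']
        refine (hπ3 _ ?_).symm
        rw [nxt]
        apply hlmin d hd _ (by omega)
        rw [hij]; exact j.isLt
      · intro e
        obtain ⟨⟨u, v⟩, huv⟩ : ∃ p : V × V, G.ends e = s(p.1, p.2) := by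
          induction h : G.ends e using Sym2.ind with
          | _ u v => exact ⟨(u, v), rfl⟩
        have hb : ∀ i : {i : Fin W.len // W.edges i = e},
            (π^[i.1.val] d).1.2.1 = u ∨ (π^[i.1.val] d).1.2.1 = v := by
          intro i
          have h1 := (π^[i.1.val] d).2.1
          have h2 : (π^[i.1.val] d).1.1 = e := i.2
          rw [h2, huv] at h1
          have : (π^[i.1.val] d).1.2.1 ∈ s(u, v) := by rw [h1]; simp
          simpa using this
        have : Function.Injective (fun i : {i : Fin W.len // W.edges i = e} =>
            decide ((π^[i.1.val] d).1.2.1 = u)) := by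
          intro i j hij
          have ht : (π^[i.1.val] d).1.2.1 = (π^[j.1.val] d).1.2.1 := by
            simp only [decide_eq_decide] at hij
            rcases hb i with h1 | h1
            · rw [h1, hij.1 h1]
            · rcases hb j with h2 | h2
              · rw [h2, hij.2 h2]
              · rw [h1, h2]
          have he : (π^[i.1.val] d).1.1 = (π^[j.1.val] d).1.1 := i.2.trans j.2.symm
          have heq := ext2 _ _ he ht
          apply Subtype.ext
          apply Fin.ext
          rcases le_total i.1.val j.1.val with h | h
          · exact hinj _ _ h j.1.isLt heq
          · exact (hinj _ _ h i.1.isLt heq.symm).symm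
        simpa using Nat.card_le_card_of_injective _ this
    have h1 := hx.2.2 W hW
    have h2 : ∑ i, x (W.verts i) = ∑ i ∈ Finset.range (l d + 1), x (π^[i] d).1.2.1 :=
      Fin.sum_univ_eq_sum_range (fun i => x (π^[i] d).1.2.1) (l d + 1)
    rw [h2, Finset.sum_range_succ, (hl d hd).2, hx.2.1, add_zero] at h1
    exact h1
  have hlow : (Z.card : ℝ) ≤ ∑ d : A, x d.1.2.1 := by
    refine le_trans ?_ hsum
    have := Finset.sum_le_sum hcyc
    simpa using this
  have hup : ∑ d : A, x d.1.2.1 ≤ 2 * ∑ v, x v := by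
    rw [← Finset.sum_fiberwise (s := Finset.univ) (g := fun d : A => d.1.2.1), Finset.mul_sum]
    apply Finset.sum_le_sum
    intro v _
    have : ∑ d : A with d.1.2.1 = v, x d.1.2.1 =
        (Finset.card (Finset.univ.filter fun d : A => d.1.2.1 = v) : ℝ) * x v := by
      rw [← nsmul_eq_mul]
      apply Finset.sum_eq_card_nsmul
      intro d hd
      rw [(Finset.mem_filter.1 hd).2]
    rw [this]
    by_cases hv : v = s
    · rw [hv, hx.2.1]; simp
    · apply mul_le_mul_of_nonneg_right _ (hx.1 v)
      have : Finset.card (Finset.univ.filter fun d : A => d.1.2.1 = v) ≤ (S v).card := by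
        apply Finset.card_le_card_of_injOn (fun d : A => d.1.1)
        · intro d hd
          have hd' : d.1.2.1 = v := by simpa using hd
          exact hgS v d.1.1 d.1.2.2 (hd' ▸ d.2)
        · intro d hd d' hd' h
          have h1 : d.1.2.1 = v := by simpa using hd
          have h2 : d'.1.2.1 = v := by simpa using hd'
          exact ext2 _ _ h (h1.trans h2.symm)
      exact_mod_cast this.trans (hS v hv)
  have hsize : ∑ e : E, Set.indicator {e' : E | s ∈ G.ends e'} f e ≤ Z.card := by
    have h1 : ∀ e, Set.indicator {e' : E | s ∈ G.ends e'} f e =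
        if (s ∈ G.ends e ∧ f e = 1) then (1 : ℝ) else 0 := by
      intro e
      by_cases h : s ∈ G.ends e
      · rcases hf.2.1 e h with h0 | h0 <;> simp [Set.indicator, h, h0]
      · simp [Set.indicator, h]
    simp_rw [h1]
    rw [Finset.sum_boole]
    have : (Finset.univ.filter fun e => s ∈ G.ends e ∧ f e = 1) ⊆ Z.image (fun d : A => d.1.1) := by
      intro e he
      obtain ⟨h, h1⟩ := (Finset.mem_filter.1 he).2
      obtain ⟨w, hw⟩ := Sym2.mem_iff_exists.1 h
      exact Finset.mem_image.2 ⟨⟨(e, s, w), hw, Or.inl h1⟩, (hZ _).2 rfl, rfl⟩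
    exact_mod_cast (Finset.card_le_card this).trans Finset.card_image_le
  unfold Multigraph.basicSize
  linarith

end BasicLeCover


/-- the size of every basic `s`-cycle packing is at most the
size of every `s`-cycle cover. -/
theorem stmt11_basic_le_cover {V E : Type} [Fintype V] [Fintype E] (G : Multigraph V E)
    (hloop : G.LoopFree) (s : V) (f : E → ℝ) (hf : G.IsBasicSCyclePacking s f)
    (x : V → ℝ) (hx : G.IsSCycleCover s x) :
    G.basicSize s f ≤ ∑ v, x v := by
  exact BasicLeCover.main G hloop s f hf x hx
end

section
/- Let G=(V,E) be a multigraph without self-loops, let s ∈ V, let f be a basic s-cycle packing of G, let W = (v₀,e₁,…,v_l) be an f-augmenting walk, and let f_W : E → {0,1/2,1} be the function obtained by augmenting f along W. Then f_W is a basic s-cycle packing; moreover, if v_l = s then the size of f_W equals the size of f plus one, and otherwise the size of f_W equals the size of f plus 1/2. -/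
namespace Multigraph
open Finset

variable {V E : Type}

noncomputable def cntc (G : Multigraph V E) (f : E → ℝ) (c : ℝ) (v : V) : ℕ :=
  Nat.card {e : E // v ∈ G.ends e ∧ f e = c}

open Classical in
lemma cntc_eq_sum [Fintype E] (G : Multigraph V E) (f : E → ℝ) (c : ℝ) (v : V) :
    G.cntc f c v = ∑ e, if v ∈ G.ends e ∧ f e = c then 1 else 0 := by
  rw [cntc, Nat.card_eq_fintype_card, Fintype.card_subtype, Finset.card_filter]

open Classical in
lemma cntc_change [Fintype E] (G : Multigraph V E) (f g : E → ℝ) (c : ℝ) (v : V) (A : Finset E)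
    (hA : ∀ e, e ∉ A → v ∈ G.ends e → g e = f e) :
    G.cntc g c v + ∑ e ∈ A, (if v ∈ G.ends e ∧ f e = c then 1 else 0)
      = G.cntc f c v + ∑ e ∈ A, (if v ∈ G.ends e ∧ g e = c then 1 else 0) := by
  rw [cntc_eq_sum, cntc_eq_sum, ← Finset.sum_add_sum_compl A, ← Finset.sum_add_sum_compl A]
  have : ∑ e ∈ Aᶜ, (if v ∈ G.ends e ∧ g e = c then 1 else 0)
      = ∑ e ∈ Aᶜ, (if v ∈ G.ends e ∧ f e = c then 1 else 0) := by
    apply Finset.sum_congr rfl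
    intro e he
    have h := hA e (by simpa using he)
    by_cases hv : v ∈ G.ends e
    · rw [h hv]
    · simp [hv]
  rw [this]; ring

lemma cntc_zero [Fintype E] {G : Multigraph V E} {f g : E → ℝ} {v : V}
    (h : ∀ e, v ∈ G.ends e → g e = f e) (c : ℝ) : G.cntc g c v = G.cntc f c v := by
  have := cntc_change G f g c v ∅ (fun e _ he => h e he)
  simpa using this

open Classical in
lemma cntc_two [Fintype E] {G : Multigraph V E} {f g : E → ℝ} {v : V} {a b : E} (hab : a ≠ b)
    (ha : v ∈ G.ends a) (hb : v ∈ G.ends b)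
    (h : ∀ e, e ≠ a → e ≠ b → v ∈ G.ends e → g e = f e) (c : ℝ) :
    G.cntc g c v + ((if f a = c then 1 else 0) + (if f b = c then 1 else 0))
      = G.cntc f c v + ((if g a = c then 1 else 0) + (if g b = c then 1 else 0)) := by
  have := cntc_change G f g c v {a, b} (fun e h1 he => h e (by grind) (by grind) he)
  simpa [Finset.sum_pair hab, ha, hb] using this

open Classical in
lemma cntc_three [Fintype E] {G : Multigraph V E} {f g : E → ℝ} {v : V} {a b c : E}
    (hab : a ≠ b) (hac : a ≠ c) (hbc : b ≠ c)
    (ha : v ∈ G.ends a) (hb : v ∈ G.ends b) (hc : v ∈ G.ends c)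
    (h : ∀ e, e ≠ a → e ≠ b → e ≠ c → v ∈ G.ends e → g e = f e) (t : ℝ) :
    G.cntc g t v + ((if f a = t then 1 else 0) + ((if f b = t then 1 else 0)
        + (if f c = t then 1 else 0)))
      = G.cntc f t v + ((if g a = t then 1 else 0) + ((if g b = t then 1 else 0)
        + (if g c = t then 1 else 0))) := by
  have := cntc_change G f g t v {a, b, c}
    (fun e h1 he => h e (by grind) (by grind) (by grind) he)
  have hs : ∀ F : E → ℕ, ∑ e ∈ ({a, b, c} : Finset E), F e = F a + (F b + F c) := by
    intro F
    rw [Finset.sum_insert (by grind), Finset.sum_pair hbc]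
  simpa [hs, ha, hb, hc] using this

/-- lower bound: two distinct incident edges of value `c`. -/
lemma cntc_pos [Fintype E] {G : Multigraph V E} {f : E → ℝ} {v : V} {a : E} {c : ℝ}
    (ha : v ∈ G.ends a) (hc : f a = c) : 0 < G.cntc f c v := by
  have : Nonempty {e : E // v ∈ G.ends e ∧ f e = c} := ⟨⟨a, ha, hc⟩⟩
  exact Nat.card_pos

lemma cntc_three_le [Fintype E] {G : Multigraph V E} {f : E → ℝ} {v : V} {a b d : E} {c : ℝ}
    (hab : a ≠ b) (had : a ≠ d) (hbd : b ≠ d)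
    (ha : v ∈ G.ends a) (hb : v ∈ G.ends b) (hd : v ∈ G.ends d)
    (h1 : f a = c) (h2 : f b = c) (h3 : f d = c) : 3 ≤ G.cntc f c v := by
  classical
  rw [cntc, Nat.card_eq_fintype_card, Fintype.card_subtype]
  have : ({a, b, d} : Finset E) ⊆ univ.filter (fun e => v ∈ G.ends e ∧ f e = c) := by
    intro x hx
    simp only [mem_insert, mem_singleton] at hx
    rcases hx with rfl | rfl | rfl <;> simp [*]
  have h := Finset.card_le_card this
  rwa [Finset.card_eq_three.mpr ⟨a, b, d, hab, had, hbd, rfl⟩] at h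

lemma typeO_iff [Fintype E] {G : Multigraph V E} {f : E → ℝ}
    (hf : ∀ e, f e = 0 ∨ f e = 1/2 ∨ f e = 1) (v : V) :
    G.IsTypeO f v ↔ G.cntc f 1 v = 0 ∧ G.cntc f (1/2) v = 0 := by
  constructor
  · intro h
    constructor
    all_goals
      rw [cntc, Nat.card_eq_zero]
      left
      constructor
      rintro ⟨e, he, h2⟩
      rw [h e he] at h2
      norm_num at h2
  · rintro ⟨h1, h2⟩ e he
    rcases hf e with h | h | h
    · exact h
    · have := cntc_pos he h; omega
    · have := cntc_pos he h; omega

/-- The four allowed pairs of counts. -/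
def OkType (G : Multigraph V E) (f : E → ℝ) (v : V) : Prop :=
  (G.cntc f 1 v = 0 ∧ G.cntc f (1/2) v = 0) ∨ (G.cntc f 1 v = 2 ∧ G.cntc f (1/2) v = 0) ∨
  (G.cntc f 1 v = 0 ∧ G.cntc f (1/2) v = 2) ∨ (G.cntc f 1 v = 1 ∧ G.cntc f (1/2) v = 2)

structure Cyc (G : Multigraph V E) (m : ℕ) (c : ℕ → V) (d : ℕ → E) : Prop where
  pos : 0 < m
  ends : ∀ j < m, G.ends (d j) = s(c j, c (j+1))
  dinj : ∀ i < m, ∀ j < m, d i = d j → i = j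
  cinj : ∀ i < m, ∀ j < m, c i = c j → i = j
  closed : c 0 = c m

lemma card_fin (n : ℕ) (p : ℕ → Prop) [DecidablePred p] :
    Nat.card {i : Fin n // p i.val} = #{k ∈ range n | p k} := by
  rw [Nat.card_eq_fintype_card, Fintype.card_subtype, Finset.card_filter, Finset.card_filter]
  exact Fin.sum_univ_eq_sum_range (fun k => if p k then 1 else 0) n

def Walk.vn {G : Multigraph V E} (W : G.Walk) (n : ℕ) : V :=
  if h : n < W.len + 1 then W.verts ⟨n, h⟩ else W.verts 0

def Walk.en {G : Multigraph V E} (W : G.Walk) (n : ℕ) : E :=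
  if h : n < W.len then W.edges ⟨n, h⟩ else W.edges ⟨0, W.len_pos⟩

lemma Walk.vn_eq {G : Multigraph V E} (W : G.Walk) (n : ℕ) (h : n < W.len + 1) :
    W.verts ⟨n, h⟩ = W.vn n := by simp [Walk.vn, h]
lemma Walk.vn_cast {G : Multigraph V E} (W : G.Walk) (i : Fin W.len) :
    W.verts i.castSucc = W.vn i.val := W.vn_eq i.val (by omega)
lemma Walk.vn_finish {G : Multigraph V E} (W : G.Walk) :
    W.finish = W.vn W.len := W.vn_eq W.len (by omega)
lemma Walk.vn_start {G : Multigraph V E} (W : G.Walk) :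
    W.start = W.vn 0 := W.vn_eq 0 (by omega)
lemma Walk.en_eq {G : Multigraph V E} (W : G.Walk) (n : ℕ) (h : n < W.len) :
    W.edges ⟨n, h⟩ = W.en n := by simp [Walk.en, h]
lemma Walk.en_fin {G : Multigraph V E} (W : G.Walk) (i : Fin W.len) :
    W.edges i = W.en i.val := W.en_eq i.val i.isLt
lemma Walk.ends_n {G : Multigraph V E} (W : G.Walk) (n : ℕ) (h : n < W.len) :
    G.ends (W.en n) = s(W.vn n, W.vn (n+1)) := by
  rw [← W.en_eq n h, W.valid, ← W.vn_eq n (by omega), ← W.vn_eq (n+1) (by omega)]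
  rfl

lemma Walk.IsCycle.cyc {G : Multigraph V E} {W : G.Walk} (h : W.IsCycle) :
    G.Cyc W.len W.vn W.en where
  pos := W.len_pos
  ends := W.ends_n
  dinj i hi j hj hij := by
    have := h.2.1 (a₁ := ⟨i, hi⟩) (a₂ := ⟨j, hj⟩) (by rw [W.en_eq, W.en_eq, hij])
    simpa using this
  cinj i hi j hj hij := by
    have := h.2.2 (a₁ := ⟨i, hi⟩) (a₂ := ⟨j, hj⟩) (by simp only [W.vn_cast]; exact hij)
    simpa using this
  closed := by rw [← W.vn_start, ← W.vn_finish]; exact h.1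

/-- Reformulated basic packing. -/
structure Basic (G : Multigraph V E) (s : V) (f : E → ℝ) : Prop where
  val : ∀ e : E, f e = 0 ∨ f e = 1/2 ∨ f e = 1
  sval : ∀ e : E, s ∈ G.ends e → f e = 0 ∨ f e = 1
  ty : ∀ v : V, v ≠ s → G.OkType f v
  odd : open Classical in ∀ m c d, G.Cyc m c d → (∀ j < m, f (d j) = 1/2) →
    Odd #{k ∈ range m | G.IsTypeT f (c k)}

lemma basic_iff [Fintype E] (G : Multigraph V E) (s : V) (f : E → ℝ) :
    G.IsBasicSCyclePacking s f ↔ G.Basic s f := by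
  classical
  constructor
  · rintro ⟨h1, h2, h3, h4⟩
    refine ⟨h1, h2, ?_, ?_⟩
    · intro v hv
      have := h3 v hv
      rw [typeO_iff h1] at this
      exact this
    · intro m c d hC hd
      have := h4 ⟨m, hC.pos, fun i => c i.val, fun i => d i.val, fun i => hC.ends i.val i.isLt⟩
        ⟨hC.closed, fun i j hij => Fin.ext (hC.dinj _ i.isLt _ j.isLt hij),
          fun i j hij => Fin.ext (hC.cinj _ i.isLt _ j.isLt hij)⟩ (fun j => hd _ j.isLt)
      have h5 := card_fin m (fun k => G.IsTypeT f (c k))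
      convert this using 1
      rw [← h5]; rfl
  · rintro ⟨h1, h2, h3, h4⟩
    refine ⟨h1, h2, ?_, ?_⟩
    · intro v hv
      rw [typeO_iff h1]
      exact h3 v hv
    · intro W hW hd
      have := h4 W.len W.vn W.en hW.cyc (fun j hj => by rw [← W.en_eq j hj]; exact hd _)
      rw [← Multigraph.card_fin] at this
      simpa only [W.vn_cast] using this

/-- predecessor in cyclic order. -/
def pr (m k : ℕ) : ℕ := if k = 0 then m - 1 else k - 1

lemma sum_pr (m : ℕ) (x : ℕ → ZMod 2) : ∑ k ∈ range m, x (pr m k) = ∑ k ∈ range m, x k := by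
  cases m with
  | zero => simp
  | succ n =>
    rw [Finset.sum_range_succ', Finset.sum_range_succ]
    simp [pr]

section cyc
variable {G : Multigraph V E} {m : ℕ} {c : ℕ → V} {d : ℕ → E}

lemma Cyc.pr_lt (h : G.Cyc m c d) {k : ℕ} (hk : k < m) : pr m k < m := by
  have := h.pos; unfold pr; split <;> omega

lemma Cyc.mem (h : G.Cyc m c d) {k : ℕ} (hk : k < m) : c k ∈ G.ends (d k) := by
  rw [h.ends k hk]; simp

lemma Cyc.c_pr (h : G.Cyc m c d) {k : ℕ} (_hk : k < m) : c (pr m k + 1) = c k := by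
  have := h.pos
  unfold pr; split
  · next h0 => rw [h0, h.closed]; congr 1; omega
  · congr 1; omega

lemma Cyc.mem_pr (h : G.Cyc m c d) {k : ℕ} (hk : k < m) : c k ∈ G.ends (d (pr m k)) := by
  rw [h.ends _ (h.pr_lt hk), h.c_pr hk]; simp

lemma Cyc.two_le (h : G.Cyc m c d) (hl : G.LoopFree) : 2 ≤ m := by
  by_contra hm
  have h1 : m = 1 := by have := h.pos; omega
  subst h1
  have := hl (d 0)
  rw [h.ends 0 (by omega), h.closed] at this
  simp at this

lemma Cyc.d_ne (h : G.Cyc m c d) (hl : G.LoopFree) {k : ℕ} (hk : k < m) : d (pr m k) ≠ d k := by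
  intro he
  have h1 := h.dinj _ (h.pr_lt hk) _ hk he
  have h2 := h.two_le hl
  unfold pr at h1
  split at h1 <;> omega

lemma Cyc.inc (h : G.Cyc m c d) {k j : ℕ} (hk : k < m) (hj : j < m) (hm : c k ∈ G.ends (d j)) :
    j = k ∨ j = pr m k := by
  rw [h.ends j hj, Sym2.mem_iff] at hm
  rcases hm with h1 | h1
  · left; exact (h.cinj _ hk _ hj h1).symm
  · right
    by_cases hjm : j + 1 < m
    · have := h.cinj _ hk _ hjm h1
      subst this
      simp [pr]
    · have hj' : j + 1 = m := by omega
      rw [hj', ← h.closed] at h1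
      have := h.cinj _ hk _ h.pos h1
      subst this
      simp [pr]; omega

lemma Cyc.inc' (h : G.Cyc m c d) {x : V} {j : ℕ} (hj : j < m) (hm : x ∈ G.ends (d j)) :
    ∃ k < m, x = c k := by
  rw [h.ends j hj, Sym2.mem_iff] at hm
  rcases hm with h1 | h1
  · exact ⟨j, hj, h1⟩
  · by_cases hjm : j + 1 < m
    · exact ⟨_, hjm, h1⟩
    · exact ⟨0, h.pos, by rw [h1, h.closed]; congr 1; omega⟩

end cyc

/-- cycles untouched by the change keep odd parity. -/
lemma old_cycle [Fintype E] {G : Multigraph V E} {s : V} {f g : E → ℝ} (hf : G.Basic s f)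
    {m c d} (hC : G.Cyc m c d) (hg : ∀ j < m, g (d j) = 1/2)
    (hu : ∀ k < m, ∀ e, c k ∈ G.ends e → g e = f e) :
    open Classical in Odd #{k ∈ range m | G.IsTypeT g (c k)} := by
  classical
  have h1 := hf.odd m c d hC (fun j hj => by rw [← hu j hj _ (hC.mem hj)]; exact hg j hj)
  convert h1 using 2
  apply Finset.filter_congr
  intro k hk
  have hk' : k < m := by simpa using hk
  have a1 : G.cnt1 g (c k) = G.cnt1 f (c k) := cntc_zero (hu k hk') 1
  have a2 : G.cntH g (c k) = G.cntH f (c k) := cntc_zero (hu k hk') (1/2)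
  rw [IsTypeT, IsTypeT, a1, a2]

/-- size changes -/
lemma size_change [Fintype E] {G : Multigraph V E} {s : V} {f g : E → ℝ} (A : Finset E)
    (hA : ∀ e ∈ A, s ∈ G.ends e ∧ f e = 0 ∧ g e = 1)
    (h : ∀ e, e ∉ A → s ∈ G.ends e → g e = f e) :
    G.basicSize s g = G.basicSize s f + (1/2) * #A := by
  classical
  unfold basicSize
  rw [← mul_add]
  congr 1
  rw [← Finset.sum_add_sum_compl A, ← Finset.sum_add_sum_compl A]
  have h1 : ∑ e ∈ A, Set.indicator {e' : E | s ∈ G.ends e'} g e = #A := by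
    rw [Finset.card_eq_sum_ones, Nat.cast_sum]
    apply Finset.sum_congr rfl
    intro e he
    simp [Set.indicator, hA e he]
  have h2 : ∑ e ∈ A, Set.indicator {e' : E | s ∈ G.ends e'} f e = 0 := by
    apply Finset.sum_eq_zero
    intro e he
    simp [Set.indicator, hA e he]
  have h3 : ∑ e ∈ Aᶜ, Set.indicator {e' : E | s ∈ G.ends e'} g e
      = ∑ e ∈ Aᶜ, Set.indicator {e' : E | s ∈ G.ends e'} f e := by
    apply Finset.sum_congr rfl
    intro e he
    by_cases hs : s ∈ G.ends e
    · simp [Set.indicator, hs, h e (by simpa using he) hs]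
    · simp [Set.indicator, hs]
  rw [h1, h2, h3]; ring

/-! vertex lemmas -/
section vert
variable [Fintype E] {G : Multigraph V E} {f g : E → ℝ} {v : V}

/-- O or I condition -/
def OI (G : Multigraph V E) (f : E → ℝ) (v : V) (a b : E) : Prop :=
  G.cntc f (1/2) v = 0 ∧ ((G.cntc f 1 v = 0 ∧ f a = 0 ∧ f b = 0) ∨
    (G.cntc f 1 v = 2 ∧ (f a = 1 ∨ f b = 1)))

lemma OkType.of_zero (h0 : G.OkType f v) (h : ∀ e, v ∈ G.ends e → g e = f e) : G.OkType g v := by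
  unfold OkType at *
  rw [cntc_zero h 1, cntc_zero h (1/2)]; exact h0

lemma flip_pair {a b : E} (hab : a ≠ b) (ha : v ∈ G.ends a) (hb : v ∈ G.ends b)
    (h : ∀ e, e ≠ a → e ≠ b → v ∈ G.ends e → g e = f e)
    (va : f a = 0 ∨ f a = 1) (vb : f b = 0 ∨ f b = 1) (hOI : G.OI f v a b)
    (ga : g a = 1 - f a) (gb : g b = 1 - f b) : G.OkType g v := by
  have h1 := cntc_two hab ha hb h 1
  have h2 := cntc_two hab ha hb h (1/2)
  obtain ⟨hH, hO⟩ := hOI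
  rw [ga, gb] at h1 h2
  unfold OkType
  rcases va with va | va <;> rcases vb with vb | vb <;> rw [va, vb] at h1 h2 hO <;>
    norm_num at h1 h2 hO hH ⊢ <;> omega

lemma half_pair {a b : E} (hab : a ≠ b) (ha : v ∈ G.ends a) (hb : v ∈ G.ends b)
    (h : ∀ e, e ≠ a → e ≠ b → v ∈ G.ends e → g e = f e)
    (va : f a = 0 ∨ f a = 1) (vb : f b = 0 ∨ f b = 1) (hOI : G.OI f v a b)
    (ga : g a = 1/2) (gb : g b = 1/2) : G.OkType g v ∧ (G.IsTypeT g v ↔ ¬ (f a = f b)) := by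
  have h1 := cntc_two hab ha hb h 1
  have h2 := cntc_two hab ha hb h (1/2)
  obtain ⟨hH, hO⟩ := hOI
  rw [ga, gb] at h1 h2
  change _ ∧ (G.cntc g 1 v = 1 ∧ G.cntc g (1/2) v = 2 ↔ _)
  unfold OkType
  rcases va with va | va <;> rcases vb with vb | vb <;> rw [va, vb] at h1 h2 hO ⊢ <;>
    norm_num at h1 h2 hO hH ⊢ <;> omega

lemma half_triple {a b c : E} (hab : a ≠ b) (hac : a ≠ c) (hbc : b ≠ c)
    (ha : v ∈ G.ends a) (hb : v ∈ G.ends b) (hc : v ∈ G.ends c)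
    (h : ∀ e, e ≠ a → e ≠ b → e ≠ c → v ∈ G.ends e → g e = f e)
    (va : f a = 0 ∨ f a = 1) (vb : f b = 0 ∨ f b = 1) (vc : f c = 0 ∨ f c = 1)
    (hOI : G.OI f v a b) (hOI' : G.OI f v a c)
    (ga : g a = 1 - f a) (gb : g b = 1/2) (gc : g c = 1/2) :
    G.OkType g v ∧ (G.IsTypeT g v ↔ (f b = f c)) := by
  have h1 := cntc_three hab hac hbc ha hb hc h 1
  have h2 := cntc_three hab hac hbc ha hb hc h (1/2)
  have hle : f a = 1 → f b = 1 → f c = 1 → 3 ≤ G.cntc f 1 v :=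
    cntc_three_le hab hac hbc ha hb hc
  obtain ⟨hH, hO⟩ := hOI
  obtain ⟨-, hO'⟩ := hOI'
  rw [ga, gb, gc] at h1 h2
  change _ ∧ (G.cntc g 1 v = 1 ∧ G.cntc g (1/2) v = 2 ↔ _)
  unfold OkType
  rcases va with va | va <;> rcases vb with vb | vb <;> rcases vc with vc | vc <;>
    rw [va] at h1 h2 hO hO' hle <;> rw [vb] at h1 h2 hO hle <;> rw [vc] at h1 h2 hO' hle <;>
    rw [vb, vc] <;>
    norm_num at h1 h2 hO hO' hH hle ⊢ <;> omega

/-- Cycle vertex away from the walk. -/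
lemma cyc_pair {a b : E} (hab : a ≠ b) (ha : v ∈ G.ends a) (hb : v ∈ G.ends b)
    (h : ∀ e, e ≠ a → e ≠ b → v ∈ G.ends e → g e = f e)
    (va : f a = 1/2) (vb : f b = 1/2) (hT : G.OkType f v)
    (ga : g a = 0 ∨ g a = 1) (gb : g b = 0 ∨ g b = 1) (hg : g a = g b ↔ ¬ G.IsTypeT f v) :
    G.OkType g v := by
  have h1 := cntc_two hab ha hb h 1
  have h2 := cntc_two hab ha hb h (1/2)
  have hp := cntc_pos ha va
  rw [va, vb] at h1 h2
  change _ ↔ ¬ (G.cntc f 1 v = 1 ∧ G.cntc f (1/2) v = 2) at hg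
  unfold OkType at *
  rcases ga with ga | ga <;> rcases gb with gb | gb <;> rw [ga, gb] at h1 h2 hg <;>
    norm_num at h1 h2 hg hT hp ⊢ <;> omega

/-- The vertex where the walk meets the cycle. -/
lemma cyc_triple {a b c : E} (hab : a ≠ b) (hac : a ≠ c) (hbc : b ≠ c)
    (ha : v ∈ G.ends a) (hb : v ∈ G.ends b) (hc : v ∈ G.ends c)
    (h : ∀ e, e ≠ a → e ≠ b → e ≠ c → v ∈ G.ends e → g e = f e)
    (va : f a = 0 ∨ f a = 1) (vb : f b = 1/2) (vc : f c = 1/2)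
    (hT : G.OkType f v) (ga : g a = 1 - f a) (gb : g b = 0)
    (gc : G.IsTypeT f v → g c = 0) (gc' : ¬ G.IsTypeT f v → g c = 1) : G.OkType g v := by
  have h1 := cntc_three hab hac hbc ha hb hc h 1
  have h2 := cntc_three hab hac hbc ha hb hc h (1/2)
  have hp := cntc_pos hb vb
  have hp1 : f a = 1 → 0 < G.cntc f 1 v := cntc_pos ha
  rw [ga, gb, vb, vc] at h1 h2
  have hTT : G.IsTypeT f v ↔ (G.cntc f 1 v = 1 ∧ G.cntc f (1/2) v = 2) := Iff.rfl
  unfold OkType at *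
  by_cases hTv : G.IsTypeT f v
  · replace gc := gc hTv
    rw [hTT] at hTv
    rcases va with va | va <;> rw [va] at hp1 <;> rw [va, gc] at h1 h2 <;>
    norm_num at h1 h2 hT hp hp1 hTv ⊢ <;> omega
  · replace gc := gc' hTv
    rw [hTT] at hTv
    rcases va with va | va <;> rw [va] at hp1 <;> rw [va, gc] at h1 h2 <;>
    norm_num at h1 h2 hT hp hp1 hTv ⊢ <;> omega

end vert

structure Aug (G : Multigraph V E) (s : V) (f : E → ℝ) (l : ℕ) (v : ℕ → V) (e : ℕ → E) :
    Prop where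
  pos : 0 < l
  ends : ∀ j < l, G.ends (e j) = s(v j, v (j+1))
  einj : ∀ i < l, ∀ j < l, e i = e j → i = j
  vinj : ∀ i < l, ∀ j < l, v i = v j → i = j
  v0 : v 0 = s
  fe0 : f (e 0) = 0
  mid : ∀ k, 0 < k → k < l → G.OI f (v k) (e (k-1)) (e k)
  fin1 : v l = s → f (e (l-1)) = 0
  fin2 : ∀ i, 0 < i → i < l → v l = v i → G.OI f (v i) (e (i-1)) (e (l-1))

section aug
variable [Fintype E] {G : Multigraph V E} {s : V} {f g : E → ℝ} {l : ℕ} {v : ℕ → V} {e : ℕ → E}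

lemma Aug.mem (h : G.Aug s f l v e) {k : ℕ} (hk : k < l) : v k ∈ G.ends (e k) := by
  rw [h.ends k hk]; simp

lemma Aug.mem_pr (h : G.Aug s f l v e) {k : ℕ} (h0 : 0 < k) (hk : k ≤ l) :
    v k ∈ G.ends (e (k-1)) := by
  rw [h.ends (k-1) (by omega), show k - 1 + 1 = k by omega]; simp

lemma Aug.ne_s (h : G.Aug s f l v e) {k : ℕ} (h0 : 0 < k) (hk : k < l) : v k ≠ s := by
  intro h1
  rw [← h.v0] at h1
  have := h.vinj _ hk _ h.pos h1
  omega

lemma Aug.inc (h : G.Aug s f l v e) {k j : ℕ} (hk : k < l) (hj : j < l)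
    (hm : v k ∈ G.ends (e j)) : j = k ∨ (0 < k ∧ j = k - 1) ∨ (j = l - 1 ∧ v l = v k) := by
  rw [h.ends j hj, Sym2.mem_iff] at hm
  rcases hm with h1 | h1
  · left; exact (h.vinj _ hk _ hj h1).symm
  · right
    by_cases hjm : j + 1 < l
    · have := h.vinj _ hk _ hjm h1
      left; omega
    · right
      refine ⟨by omega, ?_⟩
      rw [h1]; congr 1; omega

lemma Aug.val (h : G.Aug s f l v e) (hf : G.Basic s f) {j : ℕ} (hj : j < l) :
    f (e j) = 0 ∨ f (e j) = 1 := by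
  by_cases h0 : j = 0
  · subst h0; left; exact h.fe0
  · have h1 := h.mid j (by omega) hj
    rcases hf.val (e j) with h2 | h2 | h2
    · exact Or.inl h2
    · have := cntc_pos (h.mem hj) h2
      have := h1.1
      omega
    · exact Or.inr h2

/-- no half edge at an inner walk vertex -/
lemma Aug.no_half (h : G.Aug s f l v e) (hf : G.Basic s f) {k : ℕ} (hk : k < l) {x : E}
    (hx : v k ∈ G.ends x) : f x ≠ 1/2 := by
  intro h2
  by_cases h0 : k = 0
  · subst h0
    rw [h.v0] at hx
    rcases hf.sval x hx with h3 | h3 <;> rw [h3] at h2 <;> norm_num at h2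
  · have h1 := h.mid k (by omega) hk
    have := cntc_pos hx h2
    have := h1.1
    omega

/-- edges at s -/
lemma Aug.inc_s (h : G.Aug s f l v e) {j : ℕ} (hj : j < l)
    (hm : s ∈ G.ends (e j)) : j = 0 ∨ (j = l - 1 ∧ v l = s) := by
  rw [← h.v0] at hm ⊢
  rcases h.inc h.pos hj hm with h1 | h1 | h1
  · exact Or.inl h1
  · omega
  · exact Or.inr h1

lemma Aug.caseA (h : G.Aug s f l v e) (hf : G.Basic s f) (hl : G.LoopFree) (hs : v l = s)
    (hg : ∀ j < l, g (e j) = 1 - f (e j)) (hg' : ∀ x, (∀ j < l, x ≠ e j) → g x = f x) :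
    G.Basic s g ∧ G.basicSize s g = G.basicSize s f + 1 := by
  classical
  have hl2 : 2 ≤ l := by
    by_contra hm
    have h1 : l = 1 := by have := h.pos; omega
    subst h1
    have := hl (e 0)
    rw [h.ends 0 (by omega), h.v0, hs] at this
    simp at this
  have hgval : ∀ j < l, g (e j) = 0 ∨ g (e j) = 1 := by
    intro j hj
    rw [hg j hj]
    rcases h.val hf hj with h1 | h1 <;> rw [h1] <;> norm_num
  refine ⟨⟨?_, ?_, ?_, ?_⟩, ?_⟩
  · intro x
    by_cases hx : ∃ j < l, x = e j
    · obtain ⟨j, hj, rfl⟩ := hx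
      have := hgval j hj; tauto
    · push Not at hx
      rw [hg' x hx]; exact hf.val x
  · intro x hsx
    by_cases hx : ∃ j < l, x = e j
    · obtain ⟨j, hj, rfl⟩ := hx
      exact hgval j hj
    · push Not at hx
      rw [hg' x hx]; exact hf.sval x hsx
  · intro u hu
    by_cases hk : ∃ k, 0 < k ∧ k < l ∧ u = v k
    · obtain ⟨k, hk0, hk, rfl⟩ := hk
      refine flip_pair (a := e (k-1)) (b := e k) ?_ (h.mem_pr hk0 (by omega)) (h.mem hk) ?_
        (h.val hf (by omega)) (h.val hf hk) (h.mid k hk0 hk) (hg _ (by omega)) (hg _ hk)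
      · intro h1
        have := h.einj _ (by omega) _ hk h1
        omega
      · intro x h1 h2 hx
        apply hg'
        rintro j hj rfl
        rcases h.inc hk hj hx with h3 | h3 | h3
        · exact h2 (by rw [h3])
        · exact h1 (by rw [h3.2])
        · rw [← h3.2, hs] at hu; exact hu rfl
    · apply (hf.ty u hu).of_zero
      intro x hx
      apply hg'
      rintro j hj rfl
      apply hk
      rw [h.ends j hj, Sym2.mem_iff] at hx
      rcases hx with rfl | rfl
      · exact ⟨j, by by_contra h0; exact hu (by rw [show j = 0 by omega, h.v0]), hj, rfl⟩
      · refine ⟨j+1, by omega, ?_, rfl⟩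
        by_contra h0; exact hu (by rw [show j + 1 = l by omega, hs])
  · intro m c d hC hd
    apply old_cycle hf hC hd
    have hfd : ∀ j < m, f (d j) = 1/2 := by
      intro j hj
      rw [← hg', hd j hj]
      intro i hi h1
      have := hd j hj
      rw [h1] at this
      rcases hgval i hi with h2 | h2 <;> rw [h2] at this <;> norm_num at this
    intro k hk x hx
    apply hg'
    rintro j hj rfl
    rw [h.ends j hj, Sym2.mem_iff] at hx
    have hm := hC.mem hk
    rcases hx with h1 | h1
    · rw [h1] at hm
      exact h.no_half hf hj hm (hfd k hk)
    · rw [h1] at hm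
      by_cases h2 : j + 1 < l
      · exact h.no_half hf h2 hm (hfd k hk)
      · rw [show j + 1 = l by omega, hs, ← h.v0] at hm
        exact h.no_half hf h.pos hm (hfd k hk)
  · have hne : e 0 ≠ e (l-1) := by
      intro h1
      have := h.einj _ h.pos _ (by omega) h1
      omega
    have := size_change (G := G) (s := s) (f := f) (g := g) {e 0, e (l-1)} ?_ ?_
    · rw [this, Finset.card_pair hne]; norm_num
    · intro x hx
      simp only [mem_insert, mem_singleton] at hx
      rcases hx with rfl | rfl
      · refine ⟨?_, h.fe0, ?_⟩
        · have := h.mem h.pos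
          rwa [h.v0] at this
        · rw [hg 0 h.pos, h.fe0]; norm_num
      · refine ⟨?_, h.fin1 hs, ?_⟩
        · have := h.mem_pr h.pos le_rfl
          rwa [hs] at this
        · rw [hg _ (by omega), h.fin1 hs]; norm_num
    · intro x hx hsx
      apply hg'
      rintro j hj rfl
      rcases h.inc_s hj hsx with h1 | h1
      · rw [h1] at hx; simp at hx
      · rw [h1.1] at hx; simp at hx

set_option maxHeartbeats 1000000 in
lemma Aug.caseB (h : G.Aug s f l v e) (hf : G.Basic s f) (hl : G.LoopFree) (hs : v l ≠ s)
    {i : ℕ} (hi : i < l) (hvi : v l = v i)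
    (hg1 : ∀ j < i, g (e j) = 1 - f (e j)) (hg2 : ∀ j < l, i ≤ j → g (e j) = 1/2)
    (hg' : ∀ x, (∀ j < l, x ≠ e j) → g x = f x) :
    G.Basic s g ∧ G.basicSize s g = G.basicSize s f + 1/2 := by
  classical
  have hi0 : 0 < i := by
    by_contra h0
    rw [show i = 0 by omega, h.v0] at hvi
    exact hs hvi
  have hl2 : i + 1 < l := by
    by_contra hm
    have h1 := hl (e i)
    rw [h.ends i (by omega), show i + 1 = l by omega, hvi] at h1
    simp at h1
  have hgval : ∀ j < i, g (e j) = 0 ∨ g (e j) = 1 := by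
    intro j hj
    rw [hg1 j hj]
    rcases h.val hf (show j < l by omega) with h1 | h1 <;> rw [h1] <;> norm_num
  have ene : ∀ {a b : ℕ}, a < l → b < l → a ≠ b → e a ≠ e b := fun ha hb hab h1 =>
    hab (h.einj _ ha _ hb h1)
  -- edges changed at vertex v k
  have hun : ∀ k, 0 < k → k < l → k ≠ i → ∀ x, x ≠ e (k-1) → x ≠ e k → v k ∈ G.ends x →
      g x = f x := by
    intro k hk0 hk hki x h1 h2 hx
    apply hg'
    rintro j hj rfl
    rcases h.inc hk hj hx with h3 | h3 | h3
    · exact h2 (by rw [h3])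
    · exact h1 (by rw [h3.2])
    · rw [hvi] at h3; exact hki (h.vinj _ hk _ hi h3.2.symm)
  have huni : ∀ x, x ≠ e (i-1) → x ≠ e i → x ≠ e (l-1) → v i ∈ G.ends x → g x = f x := by
    intro x h1 h2 h4 hx
    apply hg'
    rintro j hj rfl
    rcases h.inc hi hj hx with h3 | h3 | h3
    · exact h2 (by rw [h3])
    · exact h1 (by rw [h3.2])
    · exact h4 (by rw [h3.1])
  have hmemi : v i ∈ G.ends (e (l-1)) := by
    rw [← hvi]; exact h.mem_pr h.pos le_rfl
  have Hi := half_triple (ene (by omega) (by omega) (by omega))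
    (ene (by omega) (by omega) (by omega)) (ene (by omega) (by omega) (by omega))
    (h.mem_pr hi0 hi.le) (h.mem hi) hmemi huni
    (h.val hf (by omega)) (h.val hf (by omega)) (h.val hf (by omega))
    (h.mid i hi0 hi) (h.fin2 i hi0 hi hvi) (hg1 _ (by omega)) (hg2 _ hi le_rfl)
    (hg2 _ (by omega) (by omega))
  have Hk : ∀ k, i < k → (hk : k < l) → _ := fun k hik hk =>
    half_pair (ene (by omega) (by omega) (by omega)) (h.mem_pr (k := k) (by omega) hk.le)
      (h.mem hk) (hun k (by omega) hk (by omega)) (h.val hf (by omega)) (h.val hf (by omega))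
      (h.mid k (by omega) hk) (hg2 _ (by omega) (by omega)) (hg2 _ (by omega) (by omega))
  refine ⟨⟨?_, ?_, ?_, ?_⟩, ?_⟩
  · intro x
    by_cases hx : ∃ j < l, x = e j
    · obtain ⟨j, hj, rfl⟩ := hx
      by_cases hji : j < i
      · have := hgval j hji; tauto
      · right; left; exact hg2 j hj (by omega)
    · push Not at hx
      rw [hg' x hx]; exact hf.val x
  · intro x hsx
    by_cases hx : ∃ j < l, x = e j
    · obtain ⟨j, hj, rfl⟩ := hx
      rcases h.inc_s hj hsx with h1 | h1
      · exact hgval j (by omega)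
      · exact absurd h1.2 hs
    · push Not at hx
      rw [hg' x hx]; exact hf.sval x hsx
  · intro u hu
    by_cases hk : ∃ k, 0 < k ∧ k < l ∧ u = v k
    · obtain ⟨k, hk0, hk, rfl⟩ := hk
      rcases lt_trichotomy k i with hki | hki | hki
      · exact flip_pair (ene (by omega) (by omega) (by omega)) (h.mem_pr hk0 (by omega)) (h.mem hk)
          (hun k hk0 hk (by omega))
          (h.val hf (by omega)) (h.val hf hk) (h.mid k hk0 hk) (hg1 _ (by omega)) (hg1 _ hki)
      · rw [hki]; exact Hi.1
      · exact (Hk k hki hk).1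
    · apply (hf.ty u hu).of_zero
      intro x hx
      apply hg'
      rintro j hj rfl
      apply hk
      rw [h.ends j hj, Sym2.mem_iff] at hx
      rcases hx with rfl | rfl
      · exact ⟨j, by by_contra h0; exact hu (by rw [show j = 0 by omega, h.v0]), hj, rfl⟩
      · by_cases h0 : j + 1 < l
        · exact ⟨j+1, by omega, h0, rfl⟩
        · exact ⟨i, hi0, hi, by rw [show j + 1 = l by omega, hvi]⟩
  · intro m c d hC hd
    -- each edge of the cycle is new or an old half edge
    have hnew : ∀ j < m, (∃ t, i ≤ t ∧ t < l ∧ d j = e t) ∨ f (d j) = 1/2 := by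
      intro j hj
      by_cases hx : ∃ t < l, d j = e t
      · obtain ⟨t, ht, h1⟩ := hx
        left
        refine ⟨t, ?_, ht, h1⟩
        by_contra hti
        have := hd j hj
        rw [h1] at this
        rcases hgval t (by omega) with h2 | h2 <;> rw [h2] at this <;> norm_num at this
      · push Not at hx
        right
        rw [← hg' _ hx]; exact hd j hj
    -- if a vertex is a walk vertex then both edges are new
    have hvnew : ∀ k < l, ∀ j < m, v k ∈ G.ends (d j) → ∃ t, i ≤ t ∧ t < l ∧ d j = e t := by
      intro k hk j hj hm
      rcases hnew j hj with h1 | h1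
      · exact h1
      · exact absurd h1 (h.no_half hf hk hm)
    have hvert : ∀ j < l, ∀ x, x ∈ G.ends (e j) → ∃ k < l, x = v k := by
      intro j hj x hx
      rw [h.ends j hj, Sym2.mem_iff] at hx
      rcases hx with rfl | rfl
      · exact ⟨j, hj, rfl⟩
      · by_cases h0 : j + 1 < l
        · exact ⟨j+1, h0, rfl⟩
        · exact ⟨i, hi, by rw [show j + 1 = l by omega, hvi]⟩
    by_cases hex : ∃ j < m, ∃ t, i ≤ t ∧ t < l ∧ d j = e t
    swap
    · apply old_cycle hf hC hd
      intro k hk x hx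
      apply hg'
      rintro j hj rfl
      obtain ⟨k', hk', h1⟩ := hvert j hj _ hx
      exact hex ⟨k, hk, hvnew k' hk' k hk (by rw [← h1]; exact hC.mem hk)⟩
    -- adjacent edges
    have hstep : ∀ j, j + 1 < m →
        ((∃ t, i ≤ t ∧ t < l ∧ d j = e t) ↔ (∃ t, i ≤ t ∧ t < l ∧ d (j+1) = e t)) := by
      intro j hj
      have hm1 : c (j+1) ∈ G.ends (d j) := by rw [hC.ends j (by omega)]; simp
      have hm2 := hC.mem hj
      constructor
      · rintro ⟨t, ht1, ht2, ht3⟩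
        obtain ⟨k, hk, h1⟩ := hvert t ht2 (c (j+1)) (by rw [← ht3]; exact hm1)
        exact hvnew k hk (j+1) hj (by rw [← h1]; exact hm2)
      · rintro ⟨t, ht1, ht2, ht3⟩
        obtain ⟨k, hk, h1⟩ := hvert t ht2 (c (j+1)) (by rw [← ht3]; exact hm2)
        exact hvnew k hk j (by omega) (by rw [← h1]; exact hm1)
    have hzero : ∀ j < m, ((∃ t, i ≤ t ∧ t < l ∧ d 0 = e t) ↔
        (∃ t, i ≤ t ∧ t < l ∧ d j = e t)) := by
      intro j
      induction j with
      | zero => intro _; rfl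
      | succ n ih => intro hn; rw [ih (by omega), hstep n hn]
    have hall : ∀ j < m, ∃ t, i ≤ t ∧ t < l ∧ d j = e t := by
      obtain ⟨j0, hj0, h0⟩ := hex
      intro j hj
      exact (hzero j hj).1 ((hzero j0 hj0).2 h0)
    -- v i lies on the cycle
    have hdesc : ∀ n, ∀ j < m, i + n < l → d j = e (i + n) → ∃ k < m, c k = v i := by
      intro n
      induction n with
      | zero =>
        intro j hj _ h1
        obtain ⟨k, hk, h2⟩ := hC.inc' hj (x := v i) (by rw [h1]; exact h.mem hi)
        exact ⟨k, hk, h2.symm⟩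
      | succ n ih =>
        intro j hj hn h1
        obtain ⟨k, hk, h2⟩ := hC.inc' hj (x := v (i + (n+1))) (by rw [h1]; exact h.mem hn)
        -- both edges at c k
        have key : ∀ j' < m, c k ∈ G.ends (d j') → d j' = e (i+n) ∨ d j' = e (i + (n+1)) := by
          intro j' hj' hm
          obtain ⟨t, ht1, ht2, ht3⟩ := hall j' hj'
          rw [← h2, ht3] at hm
          rcases h.inc hn ht2 hm with h3 | h3 | h3
          · right; rw [ht3, h3]
          · left; rw [ht3, h3.2]; congr 1
          · exfalso
            rw [hvi] at h3
            have := h.vinj _ hi _ hn h3.2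
            omega
        have k1 := key _ (hC.pr_lt hk) (hC.mem_pr hk)
        have k2 := key _ hk (hC.mem hk)
        have k3 := hC.d_ne hl hk
        rcases k1 with k1 | k1
        · exact ih _ (hC.pr_lt hk) (by omega) k1
        · rcases k2 with k2 | k2
          · exact ih _ hk (by omega) k2
          · exact absurd (k1.trans k2.symm) k3
    obtain ⟨k0, hk0, hck0⟩ : ∃ k < m, c k = v i := by
      obtain ⟨j, hj, t, ht1, ht2, ht3⟩ := hex
      exact hdesc (t - i) j hj (by omega) (by rw [ht3]; congr 1; omega)
    -- parity
    have hT : ∀ k < m, (G.IsTypeT g (c k) ↔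
        (f (d (pr m k)) = f (d k) ↔ k = k0)) := by
      intro k hk
      obtain ⟨t, ht1, ht2, ht3⟩ := hall k hk
      have k3 := hC.d_ne hl hk
      obtain ⟨r, hr, hcr⟩ := hvert t ht2 (c k) (by rw [← ht3]; exact hC.mem hk)
      by_cases hkk : k = k0
      · have hck : c k = v i := by rw [hkk]; exact hck0
        have key : ∀ j' < m, c k ∈ G.ends (d j') → d j' = e i ∨ d j' = e (l-1) := by
          intro j' hj' hm
          obtain ⟨t, ht1, ht2, ht3⟩ := hall j' hj'
          rw [hck, ht3] at hm
          rcases h.inc hi ht2 hm with h3 | h3 | h3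
          · left; rw [ht3, h3]
          · omega
          · right; rw [ht3, h3.1]
        have k1 := key _ (hC.pr_lt hk) (hC.mem_pr hk)
        have k2 := key _ hk (hC.mem hk)
        rw [hck, Hi.2]
        rw [← hkk]
        rcases k1 with k1 | k1 <;> rcases k2 with k2 | k2
        · exact absurd (k1.trans k2.symm) k3
        · rw [k1, k2]; simp
        · rw [k1, k2, eq_comm]; simp
        · exact absurd (k1.trans k2.symm) k3
      · have hri : r ≠ i := by
          rintro rfl
          exact hkk (hC.cinj _ hk _ hk0 (by rw [hcr, hck0]))
        have key : ∀ j' < m, c k ∈ G.ends (d j') → i ≤ r ∧ (d j' = e (r-1) ∧ i ≤ r - 1 ∨ d j' = e r) := by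
          intro j' hj' hm
          obtain ⟨t, ht1, ht2, ht3⟩ := hall j' hj'
          rw [hcr, ht3] at hm
          rcases h.inc hr ht2 hm with h3 | h3 | h3
          · exact ⟨by omega, by right; rw [ht3, h3]⟩
          · exact ⟨by omega, by left; rw [ht3, h3.2]; exact ⟨rfl, by omega⟩⟩
          · exfalso
            rw [hvi] at h3
            exact hri (h.vinj _ hr _ hi h3.2.symm)
        obtain ⟨k0', k1⟩ := key _ (hC.pr_lt hk) (hC.mem_pr hk)
        obtain ⟨_, k2⟩ := key _ hk (hC.mem hk)
        rw [hcr, (Hk r (by omega) hr).2]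
        rcases k1 with k1 | k1 <;> rcases k2 with k2 | k2
        · exact absurd (k1.1.trans k2.1.symm) k3
        · rw [k1.1, k2]; simp [hkk]
        · rw [k1, k2.1, eq_comm]; simp [hkk]
        · exact absurd (k1.trans k2.symm) k3
    rw [← ZMod.natCast_eq_one_iff_odd, Finset.natCast_card_filter]
    let x : ℕ → ZMod 2 := fun k => if f (d k) = 1 then 1 else 0
    have hfd : ∀ k < m, f (d k) = 0 ∨ f (d k) = 1 := by
      intro k hk
      obtain ⟨t, ht1, ht2, ht3⟩ := hall k hk
      rw [ht3]; exact h.val hf ht2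
    have hsum : ∀ k ∈ range m, (if G.IsTypeT g (c k) then (1 : ZMod 2) else 0)
        = x (pr m k) + x k + (if k = k0 then 1 else 0) := by
      intro k hk
      have hk : k < m := by simpa using hk
      simp only [hT k hk, x]
      rcases hfd _ hk with h1 | h1 <;> rcases hfd _ (hC.pr_lt hk) with h2 | h2 <;>
        rw [h1, h2] <;> by_cases h3 : k = k0 <;> simp [h3] <;> decide
    rw [Finset.sum_congr rfl hsum, Finset.sum_add_distrib, Finset.sum_add_distrib, sum_pr,
      CharTwo.add_self_eq_zero, Finset.sum_ite_eq']
    simp [hk0]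
  · have := size_change (G := G) (s := s) (f := f) (g := g) {e 0} ?_ ?_
    · rw [this]; simp
    · intro x hx
      simp only [mem_singleton] at hx
      subst hx
      refine ⟨?_, h.fe0, ?_⟩
      · have := h.mem h.pos
        rwa [h.v0] at this
      · rw [hg1 0 hi0, h.fe0]; norm_num
    · intro x hx hsx
      apply hg'
      rintro j hj rfl
      rcases h.inc_s hj hsx with h1 | h1
      · rw [h1] at hx; simp at hx
      · exact hs h1.2

open Classical in
lemma q_zero (m : ℕ) (p : ℕ → Prop) : #{k ∈ range m | 1 ≤ k ∧ k ≤ 0 ∧ p k} = 0 := by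
  rw [Finset.card_eq_zero, Finset.filter_eq_empty_iff]
  intro k _; omega

open Classical in
lemma q_step (m : ℕ) (p : ℕ → Prop) (j : ℕ) (h0 : 0 < j) (hj : j < m) :
    #{k ∈ range m | 1 ≤ k ∧ k ≤ j ∧ p k}
      = #{k ∈ range m | 1 ≤ k ∧ k ≤ j - 1 ∧ p k} + (if p j then 1 else 0) := by
  have h1 : (if p j then 1 else 0) = ∑ k ∈ range m, if k = j then (if p k then 1 else 0) else 0 := by
    rw [Finset.sum_ite_eq']
    simp [hj]
  rw [h1, Finset.card_filter, Finset.card_filter, ← Finset.sum_add_distrib]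
  apply Finset.sum_congr rfl
  intro k _
  split_ifs <;> first | rfl | (exfalso; omega) | (exfalso; grind)

open Classical in
lemma q_last (m : ℕ) (p : ℕ → Prop) (hm : 0 < m) :
    #{k ∈ range m | p k}
      = #{k ∈ range m | 1 ≤ k ∧ k ≤ m - 1 ∧ p k} + (if p 0 then 1 else 0) := by
  have h1 : (if p 0 then 1 else 0) = ∑ k ∈ range m, if k = 0 then (if p k then 1 else 0) else 0 := by
    rw [Finset.sum_ite_eq']
    simp [hm]
  rw [h1, Finset.card_filter, Finset.card_filter, ← Finset.sum_add_distrib]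
  apply Finset.sum_congr rfl
  intro k hk
  have : k < m := by simpa using hk
  split_ifs <;> first | rfl | (exfalso; omega) | (exfalso; grind)

set_option maxHeartbeats 1000000 in
open Classical in
lemma Aug.caseC (h : G.Aug s f l v e) (hf : G.Basic s f) (hl : G.LoopFree) (hs : v l ≠ s)
    (hnv : ∀ i < l, v l ≠ v i) {m : ℕ} {c : ℕ → V} {d : ℕ → E} (hC : G.Cyc m c d)
    (hc0 : c 0 = v l) (hfd : ∀ j < m, f (d j) = 1/2)
    (hg1 : ∀ j < l, g (e j) = 1 - f (e j))
    (hg2 : ∀ j < m, g (d j) =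
      if Even #{k ∈ range m | 1 ≤ k ∧ k ≤ j ∧ G.IsTypeT f (c k)} then 0 else 1)
    (hg' : ∀ x, (∀ j < l, x ≠ e j) → (∀ j < m, x ≠ d j) → g x = f x) :
    G.Basic s g ∧ G.basicSize s g = G.basicSize s f + 1/2 := by
  have hgval : ∀ j < l, g (e j) = 0 ∨ g (e j) = 1 := by
    intro j hj
    rw [hg1 j hj]
    rcases h.val hf hj with h1 | h1 <;> rw [h1] <;> norm_num
  have hgd : ∀ j < m, g (d j) = 0 ∨ g (d j) = 1 := by
    intro j hj
    rw [hg2 j hj]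
    split <;> simp
  have hed : ∀ i < l, ∀ j < m, e i ≠ d j := by
    intro i hi j hj h1
    have h2 := hfd j hj
    rw [← h1] at h2
    rcases h.val hf hi with h3 | h3 <;> rw [h3] at h2 <;> norm_num at h2
  have hcv : ∀ k < m, ∀ j < l, c k ≠ v j := by
    intro k hk j hj h1
    exact h.no_half hf hj (by rw [← h1]; exact hC.mem hk) (hfd k hk)
  have hcs : ∀ k < m, c k ≠ s := by
    intro k hk; rw [← h.v0]; exact hcv k hk 0 h.pos
  have hvd : ∀ k < l, ∀ j < m, v k ∉ G.ends (d j) := by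
    intro k hk j hj hm
    exact h.no_half hf hk hm (hfd j hj)
  have hce : ∀ k < m, ∀ j < l, c k ∈ G.ends (e j) → k = 0 ∧ j = l - 1 := by
    intro k hk j hj hm
    rw [h.ends j hj, Sym2.mem_iff] at hm
    rcases hm with h1 | h1
    · exact absurd h1 (hcv k hk j hj)
    · by_cases h2 : j + 1 < l
      · exact absurd h1 (hcv k hk _ h2)
      · rw [show j + 1 = l by omega, ← hc0] at h1
        exact ⟨hC.cinj _ hk _ hC.pos h1, by omega⟩
  have hm2 := hC.two_le hl
  refine ⟨⟨?_, ?_, ?_, ?_⟩, ?_⟩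
  · intro x
    by_cases hx : ∃ j < l, x = e j
    · obtain ⟨j, hj, rfl⟩ := hx
      have := hgval j hj; tauto
    · by_cases hx2 : ∃ j < m, x = d j
      · obtain ⟨j, hj, rfl⟩ := hx2
        have := hgd j hj; tauto
      · push Not at hx hx2
        rw [hg' x hx hx2]; exact hf.val x
  · intro x hsx
    by_cases hx : ∃ j < l, x = e j
    · obtain ⟨j, hj, rfl⟩ := hx
      exact hgval j hj
    · by_cases hx2 : ∃ j < m, x = d j
      · obtain ⟨j, hj, rfl⟩ := hx2
        exact hgd j hj
      · push Not at hx hx2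
        rw [hg' x hx hx2]; exact hf.sval x hsx
  · intro u hu
    by_cases hk : ∃ k, 0 < k ∧ k < l ∧ u = v k
    · obtain ⟨k, hk0, hk, rfl⟩ := hk
      refine flip_pair (a := e (k-1)) (b := e k) ?_ (h.mem_pr hk0 (by omega)) (h.mem hk) ?_
        (h.val hf (by omega)) (h.val hf hk) (h.mid k hk0 hk) (hg1 _ (by omega)) (hg1 _ hk)
      · intro h1
        have := h.einj _ (by omega) _ hk h1
        omega
      · intro x h1 h2 hx
        apply hg'
        · rintro j hj rfl
          rcases h.inc hk hj hx with h3 | h3 | h3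
          · exact h2 (by rw [h3])
          · exact h1 (by rw [h3.2])
          · exact hnv k hk h3.2
        · rintro j hj rfl
          exact hvd k hk j hj hx
    · by_cases hk2 : ∃ k < m, u = c k
      · obtain ⟨k, hkm, rfl⟩ := hk2
        by_cases hk0 : k = 0
        · subst hk0
          have hprm : pr m 0 = m - 1 := by simp [pr]
          have hne := hC.d_ne hl hC.pos
          have hmp := hC.mem_pr hC.pos
          rw [hprm] at hne hmp
          have hodd := hf.odd m c d hC hfd
          rw [q_last m (fun k => G.IsTypeT f (c k)) hC.pos] at hodd
          refine cyc_triple (a := e (l-1)) (b := d 0) (c := d (m-1))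
            (hed _ (by have := h.pos; omega) _ hC.pos)
            (hed _ (by have := h.pos; omega) _ (by omega)) hne.symm ?_ (hC.mem hC.pos) hmp ?_
            (h.val hf (by have := h.pos; omega)) (hfd _ hC.pos) (hfd _ (by omega)) (hf.ty _ hu)
            (hg1 _ (by have := h.pos; omega)) ?_ ?_ ?_
          · rw [hc0]; exact h.mem_pr h.pos le_rfl
          · intro x h1 h2 h3 hx
            apply hg'
            · rintro j hj rfl
              exact h1 (by rw [(hce 0 hC.pos j hj hx).2])
            · rintro j hj rfl
              rcases hC.inc hC.pos hj hx with h4 | h4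
              · exact h2 (by rw [h4])
              · exact h3 (by rw [h4, hprm])
          · rw [hg2 0 hC.pos, q_zero m (fun k => G.IsTypeT f (c k))]; simp
          · intro hT
            rw [if_pos hT] at hodd
            rw [hg2 _ (by omega), if_pos]
            rw [Nat.odd_add_one, Nat.not_odd_iff_even] at hodd
            exact hodd
          · intro hT
            rw [if_neg hT] at hodd
            rw [hg2 _ (by omega), if_neg]
            rw [Nat.not_even_iff_odd]
            exact hodd
        · have hprk : pr m k = k - 1 := by simp [pr, hk0]
          have hne := hC.d_ne hl hkm
          have hmp := hC.mem_pr hkm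
          rw [hprk] at hne hmp
          refine cyc_pair hne hmp (hC.mem hkm) ?_ (hfd _ (by omega)) (hfd _ hkm) (hf.ty _ hu)
            (hgd _ (by omega)) (hgd _ hkm) ?_
          · intro x h1 h2 hx
            apply hg'
            · rintro j hj rfl
              exact hk0 (hce k hkm j hj hx).1
            · rintro j hj rfl
              rcases hC.inc hkm hj hx with h4 | h4
              · exact h2 (by rw [h4])
              · exact h1 (by rw [h4, hprk])
          · rw [hg2 _ hkm, hg2 (k-1) (by omega),
              q_step m (fun k => G.IsTypeT f (c k)) k (by omega) hkm]
            by_cases hT : G.IsTypeT f (c k)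
            · simp only [hT, if_true, Nat.even_add_one]
              split_ifs <;> simp
            · simp [hT]
      · apply (hf.ty u hu).of_zero
        intro x hx
        apply hg'
        · rintro j hj rfl
          rw [h.ends j hj, Sym2.mem_iff] at hx
          rcases hx with rfl | rfl
          · exact hk ⟨j, by by_contra h0; exact hu (by rw [show j = 0 by omega, h.v0]), hj, rfl⟩
          · by_cases h0 : j + 1 < l
            · exact hk ⟨j+1, by omega, h0, rfl⟩
            · exact hk2 ⟨0, hC.pos, by rw [show j + 1 = l by omega, hc0]⟩
        · rintro j hj rfl
          exact hk2 (hC.inc' hj hx)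
  · intro m' c' d' hC' hd
    have h1 : ∀ j < m', ∀ i < l, d' j ≠ e i := by
      intro j hj i hi h1
      have := hd j hj
      rw [h1] at this
      rcases hgval i hi with h2 | h2 <;> rw [h2] at this <;> norm_num at this
    have h2 : ∀ j < m', ∀ i < m, d' j ≠ d i := by
      intro j hj i hi h1
      have := hd j hj
      rw [h1] at this
      rcases hgd i hi with h2 | h2 <;> rw [h2] at this <;> norm_num at this
    have hfd' : ∀ j < m', f (d' j) = 1/2 := by
      intro j hj
      rw [← hg' _ (h1 j hj) (h2 j hj)]; exact hd j hj
    have hcc : ∀ k < m', ∀ j < m, c' k ≠ c j := by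
      intro k hk j hj h3
      have hm1 := hC'.mem hk
      rw [h3] at hm1
      have := cntc_three_le (h2 k hk _ (hC.pr_lt hj)) (h2 k hk _ hj) (hC.d_ne hl hj)
        hm1 (hC.mem_pr hj) (hC.mem hj) (hfd' k hk) (hfd _ (hC.pr_lt hj)) (hfd _ hj)
      have h4 := hf.ty _ (hcs j hj)
      unfold OkType at h4
      omega
    have hcv' : ∀ k < m', ∀ j < l, c' k ≠ v j := by
      intro k hk j hj h1
      exact h.no_half hf hj (by rw [← h1]; exact hC'.mem hk) (hfd' k hk)
    apply old_cycle hf hC' hd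
    intro k hk x hx
    apply hg'
    · rintro j hj rfl
      rw [h.ends j hj, Sym2.mem_iff] at hx
      rcases hx with h3 | h3
      · exact hcv' k hk j hj h3
      · by_cases h0 : j + 1 < l
        · exact hcv' k hk _ h0 h3
        · rw [show j + 1 = l by omega, ← hc0] at h3
          exact hcc k hk 0 hC.pos h3
    · rintro j hj rfl
      obtain ⟨r, hr, h3⟩ := hC.inc' hj hx
      exact hcc k hk r hr h3
  · have := size_change (G := G) (s := s) (f := f) (g := g) {e 0} ?_ ?_
    · rw [this]; simp
    · intro x hx
      simp only [mem_singleton] at hx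
      subst hx
      refine ⟨?_, h.fe0, ?_⟩
      · have := h.mem h.pos
        rwa [h.v0] at this
      · rw [hg1 0 h.pos, h.fe0]; norm_num
    · intro x hx hsx
      apply hg'
      · rintro j hj rfl
        rcases h.inc_s hj hsx with h1 | h1
        · rw [h1] at hx; simp at hx
        · exact hs h1.2
      · rintro j hj rfl
        obtain ⟨r, hr, h3⟩ := hC.inc' hj hsx
        exact hcs r hr h3.symm

end aug

lemma oi_of [Fintype E] {G : Multigraph V E} {s : V} {f : E → ℝ} (hf : G.Basic s f) {v : V}
    {a b : E} (ha : v ∈ G.ends a) (hb : v ∈ G.ends b)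
    (h : G.IsTypeO f v ∨ (G.IsTypeI f v ∧ (f a = 1 ∨ f b = 1))) : G.OI f v a b := by
  rcases h with h | ⟨h, h'⟩
  · have h1 := (typeO_iff hf.val v).1 h
    exact ⟨h1.2, Or.inl ⟨h1.1, h a ha, h b hb⟩⟩
  · exact ⟨h.2, Or.inr ⟨h.1, h'⟩⟩

lemma IsAugmentingWalk.aug [Fintype E] {G : Multigraph V E} {s : V} {f : E → ℝ}
    (hf : G.Basic s f) {W : G.Walk} (h : G.IsAugmentingWalk s f W) :
    G.Aug s f W.len W.vn W.en := by
  obtain ⟨h1, h2, h3, h4, h5, h6, h7⟩ := h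
  have hv0 : W.vn 0 = s := by rw [← W.vn_start]; exact h1
  have hmem : ∀ j < W.len, W.vn j ∈ G.ends (W.en j) := by
    intro j hj; rw [W.ends_n j hj]; simp
  have hmem' : ∀ j, 0 < j → j ≤ W.len → W.vn j ∈ G.ends (W.en (j-1)) := by
    intro j h0 hj
    rw [W.ends_n (j-1) (by omega), show j - 1 + 1 = j by omega]; simp
  have hlp := W.len_pos
  refine ⟨W.len_pos, W.ends_n, ?_, ?_, hv0, ?_, ?_, ?_, ?_⟩
  · intro i hi j hj hij
    have := h3 (a₁ := ⟨i, hi⟩) (a₂ := ⟨j, hj⟩) (by rw [W.en_eq, W.en_eq, hij])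
    simpa using this
  · intro i hi j hj hij
    have := h4 (a₁ := ⟨i, hi⟩) (a₂ := ⟨j, hj⟩) (by simp only [W.vn_cast]; exact hij)
    simpa using this
  · rw [← W.en_eq 0 W.len_pos]; exact h2
  · intro k hk0 hk
    have := h5 ⟨k, hk⟩ hk0
    simp only [W.vn_cast, W.en_eq] at this
    exact oi_of hf (hmem' k hk0 hk.le) (hmem k hk) this
  · intro hs
    have := h6 ⟨0, W.len_pos⟩ (by rw [W.vn_finish, W.vn_cast, hs]; exact hv0.symm)
    simp only [W.vn_finish, W.en_eq] at this
    rcases this with h | h | h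
    · exact h.2
    · exact absurd hs h.1
    · exact absurd hs h.1
  · intro i hi0 hi hvi
    have := h6 ⟨i, hi⟩ (by rw [W.vn_finish, W.vn_cast, hvi])
    simp only [W.vn_finish, W.en_eq] at this
    have hm := hmem' W.len W.len_pos le_rfl
    rw [hvi] at hm
    apply oi_of hf (hmem' i hi0 hi.le) hm
    rw [hvi] at this
    rcases this with h | h | h
    · exfalso
      have h8 := h.1
      rw [← hv0] at h8
      have := h4 (a₁ := ⟨i, hi⟩) (a₂ := ⟨0, hlp⟩) (by simp only [W.vn_cast]; exact h8)
      simp at this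
      omega
    · exact Or.inl h.2
    · exact Or.inr h.2

end Multigraph

/-- augmenting a basic `s`-cycle packing `f` along an
`f`-augmenting walk `W` yields a basic `s`-cycle packing whose size is that of
`f` plus one if `W` ends at `s`, and plus `1/2` otherwise. -/
theorem stmt12_augment {V E : Type} [Fintype E] (G : Multigraph V E)
    (hloop : G.LoopFree) (s : V) (f : E → ℝ) (hf : G.IsBasicSCyclePacking s f)
    (W : G.Walk) (hW : G.IsAugmentingWalk s f W)
    (g : E → ℝ) (hg : G.AugmentedAlong s f W g) :
    G.IsBasicSCyclePacking s g ∧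
    (W.finish = s → G.basicSize s g = G.basicSize s f + 1) ∧
    (W.finish ≠ s → G.basicSize s g = G.basicSize s f + 1/2) := by

  classical
  rw [Multigraph.basic_iff] at hf
  have hA := hW.aug hf
  rw [Multigraph.basic_iff]
  rw [W.vn_finish]
  have hoff : ∀ x, (∀ j < W.len, x ≠ W.en j) → ∀ j : Fin W.len, x ≠ W.edges j := by
    intro x hx j
    rw [W.en_fin]
    exact hx j.val j.isLt
  rcases hg with ⟨hs, h1, h2⟩ | ⟨hs, i, hi, h1, h2, h3⟩ | ⟨hs, hn, C, hC, hc0, hfd, h1, h2, h3⟩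
  · rw [W.vn_finish] at hs
    have := hA.caseA hf hloop hs (g := g)
      (fun j hj => by have := h1 ⟨j, hj⟩; rwa [W.en_eq] at this) (fun x hx => h2 x (hoff x hx))
    exact ⟨this.1, fun _ => this.2, fun h => absurd hs h⟩
  · rw [W.vn_finish] at hs hi
    rw [W.vn_cast] at hi
    have := hA.caseB hf hloop hs i.isLt hi (g := g)
      (fun j hj => by
        have := h1 ⟨j, hj.trans i.isLt⟩ hj; rwa [W.en_eq] at this)
      (fun j hj hij => by have := h2 ⟨j, hj⟩ hij; rwa [W.en_eq] at this)
      (fun x hx => h3 x (hoff x hx))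
    exact ⟨this.1, fun h => absurd h hs, fun _ => this.2⟩
  · rw [W.vn_finish] at hs hc0
    have hc0' : C.vn 0 = W.vn W.len := by
      rw [← hc0, ← C.vn_start]; rfl
    have := hA.caseC hf hloop hs (g := g)
      (fun i hi => by have := hn ⟨i, hi⟩; rwa [W.vn_finish, W.vn_cast] at this)
      hC.cyc hc0' (fun j hj => by have := hfd ⟨j, hj⟩; rwa [C.en_eq] at this)
      (fun j hj => by have := h1 ⟨j, hj⟩; rwa [W.en_eq] at this)
      (fun j hj => by
        have := h2 ⟨j, hj⟩
        rw [C.en_eq] at this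
        rw [this, ← Multigraph.card_fin]
        simp only [C.vn_cast])
      (fun x hx hx2 => h3 x (hoff x hx) (fun j => by rw [C.en_fin]; exact hx2 j.val j.isLt))
    exact ⟨this.1, fun h => absurd h hs, fun _ => this.2⟩
end
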